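/- For every odd integer n ≥ 3 one has N̄(1,4,n) < N̄(2,4,n), and for every even integer n ≥ 2 one has N̄(1,4,n) > N̄(2,4,n). -/

import Mathlib

/-- An overpartition of `n`: a partition of `n` together with a chosen subset of its
distinct part sizes (the overlined parts). -/
def Overpartition (n : ℕ) : Type :=
  {P : n.Partition × Finset ℕ // P.2 ⊆ P.1.parts.toFinset}

/-- The Dyson rank of an overpartition: largest part minus number of parts. -/
def Overpartition.rank {n : ℕ} (P : Overpartition n) : ℤ :=
  (P.1.1.parts.sup : ℤ) - (P.1.1.parts.card : ℤ)

/-- `nbarRank m n` is the number of overpartitions of `n` with rank `m`. -/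
noncomputable def nbarRank (m : ℤ) (n : ℕ) : ℕ :=
  Nat.card {P : Overpartition n // P.rank = m}

/-- `nbar a c n` is the number of overpartitions of `n` with rank congruent to `a` mod `c`. -/
noncomputable def nbar (a : ℤ) (c : ℕ) (n : ℕ) : ℕ :=
  Nat.card {P : Overpartition n // P.rank ≡ a [ZMOD (c : ℤ)]}

/-- `pbar n` is the number of overpartitions of `n`. -/
noncomputable def pbar (n : ℕ) : ℕ := Nat.card (Overpartition n)

/-!
Let `N z = ∑ z ^ rank q ^ n`, the sum being over all overpartitions, so that `N 1`, `N i`,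
`N (-1)` and `N (-i)` determine the counts of the rank modulo `4`.

Iterating the Rogers–Fine functional equation at `z = i` collapses `N i` to `∑ q ^ (d ^ 2)` over
all integers `d`. Hence `N̄(1,4,n) = N̄(3,4,n)`, and `N̄(0,4,n) - N̄(2,4,n)` is `2` or `0`
according to whether `n` is a square.

At `z = -1`, Lovejoy's series for `N z` and Bailey's transform with the unit Bailey pair express
`N (-1)` as the ratio of a Lambert series and a theta series. With the value `qCoth q t` of
`coth` at `-t log q`, the addition formula for `coth` turns this ratio into `1 - 2 E (-q)`,
where `E q = ∑ (qCoth q t * cothQuot q t - 1)` over `t ≥ 1` and `cothQuot q t` is a polynomial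
with nonnegative coefficients. All coefficients of `E` are nonnegative, and its term `t = 1`
alone makes those of `q ^ n`, `n ≥ 2`, at least `2`. Writing `e` for the coefficient of `q ^ n`
in `E`, this says `N̄(0,4,n) - N̄(1,4,n) + N̄(2,4,n) - N̄(3,4,n) = -2 (-1) ^ n e`, and together
with the evaluation at `z = i` it gives `2 (N̄(1,4,n) - N̄(2,4,n)) = 2 (-1) ^ n e + (0 or 2)`,
whose sign is that of `(-1) ^ n`.

Instead of infinite series, partial sums are compared modulo `q ^ (M + 1)` in the valuation ring
of a valued field, where `1 - z q ^ k` is invertible.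
-/

open Finset

namespace QSeries

section Congruence

variable {K Γ₀ : Type*} [Field K] [LinearOrderedCommGroupWithZero Γ₀] {v : Valuation K Γ₀}
  {q a b c : K} {m n N : ℕ}

/-- The fractional ideal `q ^ N 𝒪`, where `𝒪` is the ring of integers of `v`. For `v q < 1` a
congruence modulo this ideal says that two `q`-series agree up to `O(q ^ N)`. -/
def powIdeal (v : Valuation K Γ₀) (q : K) (N : ℕ) : Submodule v.integer K :=
  v.leSubmodule (v q ^ N)

theorem mem_powIdeal : a ∈ powIdeal v q N ↔ v a ≤ v q ^ N :=
  Iff.rfl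

theorem powIdeal_antitone (hq : v q < 1) : Antitone (powIdeal v q) := fun _ _ h =>
  v.leSubmodule_monotone (pow_le_pow_right_of_le_one' hq.le h)

theorem mul_pow_mem_powIdeal (hq : v q < 1) (hc : v c ≤ 1) (h : N ≤ n) :
    c * q ^ n ∈ powIdeal v q N := by
  rw [mem_powIdeal, map_mul, map_pow]
  exact (mul_le_of_le_one_left' hc).trans (pow_le_pow_right_of_le_one' hq.le h)

theorem pow_mem_powIdeal (hq : v q < 1) (h : N ≤ n) : q ^ n ∈ powIdeal v q N := by
  simpa using mul_pow_mem_powIdeal hq v.map_one.le h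

theorem mul_mem_powIdeal_left (hc : v c ≤ 1) (ha : a ∈ powIdeal v q N) :
    c * a ∈ powIdeal v q N := by
  rw [mem_powIdeal, map_mul]
  exact (mul_le_of_le_one_left' hc).trans ha

theorem mul_mem_powIdeal_right (ha : a ∈ powIdeal v q N) (hc : v c ≤ 1) :
    a * c ∈ powIdeal v q N :=
  mul_comm c a ▸ mul_mem_powIdeal_left hc ha

theorem div_mem_powIdeal (hc : v c = 1) (ha : a ∈ powIdeal v q N) : a / c ∈ powIdeal v q N := by
  rwa [mem_powIdeal, map_div₀, hc, div_one]

theorem mul_mem_powIdeal (ha : a ∈ powIdeal v q m) (hb : b ∈ powIdeal v q n) :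
    a * b ∈ powIdeal v q (m + n) := by
  rw [mem_powIdeal, map_mul, pow_add]
  exact mul_le_mul' ha hb

theorem smodEq_mul_left (hc : v c ≤ 1) (h : a ≡ b [SMOD powIdeal v q N]) :
    c * a ≡ c * b [SMOD powIdeal v q N] := by
  rw [SModEq.sub_mem, ← mul_sub] at *
  exact mul_mem_powIdeal_left hc h

theorem smodEq_mul_right (hc : v c ≤ 1) (h : a ≡ b [SMOD powIdeal v q N]) :
    a * c ≡ b * c [SMOD powIdeal v q N] := by
  simpa only [mul_comm _ c] using smodEq_mul_left hc h

theorem smodEq_add_of_mem (h : c ∈ powIdeal v q N) : a + c ≡ a [SMOD powIdeal v q N] := by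
  simpa [SModEq.sub_mem] using h

theorem smodEq_sub_of_mem (h : c ∈ powIdeal v q N) : a - c ≡ a [SMOD powIdeal v q N] := by
  simpa [SModEq.sub_mem] using h

theorem smodEq_sum_of_smodEq_add {U : Submodule v.integer K} {f g : ℕ → K} {M : ℕ}
    (h : ∀ k < M, f k ≡ g k + f (k + 1) [SMOD U]) :
    f 0 ≡ ∑ k ∈ range M, g k + f M [SMOD U] := by
  induction M with
  | zero => simp
  | succ M ih =>
    refine (ih fun k hk => h k (by lia)).trans ?_
    rw [sum_range_succ, add_assoc]
    exact SModEq.rfl.add (h M M.lt_succ_self)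

theorem valuation_ofNat_le_one (n : ℕ) [n.AtLeastTwo] : v (OfNat.ofNat n) ≤ 1 :=
  ofNat_mem v.integer n

theorem valuation_mul_pow_le_one (hq : v q < 1) (hc : v c ≤ 1) (n : ℕ) : v (c * q ^ n) ≤ 1 := by
  rw [map_mul, map_pow]
  exact mul_le_one' hc (pow_le_one' hq.le n)

theorem valuation_one_sub_mul_pow (hq : v q < 1) (hc : v c ≤ 1) (hn : n ≠ 0) :
    v (1 - c * q ^ n) = 1 := by
  refine v.map_one_sub_of_lt ?_
  rw [map_mul, map_pow]
  exact (mul_le_of_le_one_left' hc).trans_lt (pow_lt_one₀ zero_le hq hn)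

theorem one_sub_mul_pow_ne_zero (hq : v q < 1) (hc : v c ≤ 1) (hn : n ≠ 0) : 1 - c * q ^ n ≠ 0 :=
  v.ne_zero_iff.1 (by simp [valuation_one_sub_mul_pow hq hc hn])

theorem valuation_one_sub_pow (hq : v q < 1) (hn : n ≠ 0) : v (1 - q ^ n) = 1 := by
  simpa using valuation_one_sub_mul_pow hq v.map_one.le hn

theorem one_sub_pow_succ_ne_zero (hq : v q < 1) (n : ℕ) : 1 - q ^ (n + 1) ≠ 0 := by
  simpa using one_sub_mul_pow_ne_zero hq v.map_one.le n.succ_ne_zero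

theorem valuation_one_add_pow (hq : v q < 1) (hn : n ≠ 0) : v (1 + q ^ n) = 1 := by
  simpa using valuation_one_sub_mul_pow (c := -1) hq (by simp) hn

end Congruence

section Pochhammer

/-- The `q`-Pochhammer symbol `(a; q)ₙ`. -/
def qPoch {R : Type*} [CommRing R] (a q : R) (n : ℕ) : R :=
  ∏ j ∈ range n, (1 - a * q ^ j)

variable {K : Type*} [CommRing K] (a q : K) (n : ℕ)

@[simp]
theorem qPoch_zero : qPoch a q 0 = 1 :=
  prod_range_zero _

theorem qPoch_succ : qPoch a q (n + 1) = qPoch a q n * (1 - a * q ^ n) :=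
  prod_range_succ _ _

theorem qPoch_succ' : qPoch a q (n + 1) = (1 - a) * qPoch (a * q) q n := by
  simp [qPoch, prod_range_succ', mul_comm, pow_succ, mul_assoc]

theorem map_qPoch {S : Type*} [CommRing S] (φ : K →+* S) :
    φ (qPoch a q n) = qPoch (φ a) (φ q) n := by
  simp only [qPoch, map_prod, map_sub, map_mul, map_pow, map_one]

theorem qPoch_mul_succ : qPoch (a * q) q (n + 1) = qPoch (a * q) q n * (1 - a * q ^ (n + 1)) := by
  rw [qPoch_succ, mul_assoc a, ← pow_succ']

theorem one_sub_mul_qPoch_mul :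
    (1 - a) * qPoch (a * q) q n = qPoch a q n * (1 - a * q ^ n) := by
  rw [← qPoch_succ', qPoch_succ]

end Pochhammer

section PochhammerValuation

variable {K Γ₀ : Type*} [Field K] [LinearOrderedCommGroupWithZero Γ₀] {v : Valuation K Γ₀}
  {q c : K}

theorem valuation_qPoch_le_one (hq : v q < 1) (hc : v c ≤ 1) (n : ℕ) : v (qPoch c q n) ≤ 1 := by
  rw [qPoch, map_prod]
  exact prod_le_one' fun j _ => v.map_sub_le v.map_one.le (valuation_mul_pow_le_one hq hc j)

theorem valuation_qPoch_mul (hq : v q < 1) (hc : v c ≤ 1) (n : ℕ) : v (qPoch (c * q) q n) = 1 := by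
  rw [qPoch, map_prod]
  refine prod_eq_one fun j _ => ?_
  rw [mul_assoc, ← pow_succ']
  exact valuation_one_sub_mul_pow hq hc j.succ_ne_zero

theorem valuation_qPoch_self (hq : v q < 1) (n : ℕ) : v (qPoch q q n) = 1 := by
  simpa using valuation_qPoch_mul hq v.map_one.le n

theorem qPoch_self_ne_zero (hq : v q < 1) (n : ℕ) : qPoch q q n ≠ 0 :=
  v.ne_zero_iff.1 (by simp [valuation_qPoch_self hq])

end PochhammerValuation

section Fine

variable {K : Type*} [Field K]

/-- The partial sum `∑_{m < M} (aq; q)ₘ / (bq; q)ₘ tᵐ` of Fine's function `F(a, b; t)`. -/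
def fineSum (a b t q : K) (M : ℕ) : K :=
  ∑ m ∈ range M, qPoch (a * q) q m / qPoch (b * q) q m * t ^ m

variable {b q : K} (a t : K)

theorem fineSum_succ (b : K) (M : ℕ) : fineSum a b t q (M + 1) =
    fineSum a b t q M + qPoch (a * q) q M / qPoch (b * q) q M * t ^ M :=
  sum_range_succ _ M

theorem qPoch_mul_ne_zero (hb : ∀ n, 1 - b * q ^ (n + 1) ≠ 0) (n : ℕ) : qPoch (b * q) q n ≠ 0 :=
  prod_ne_zero_iff.2 fun j _ => by simpa [mul_assoc, ← pow_succ'] using hb j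

theorem one_sub_mul_fineSum_succ (hb : ∀ n, 1 - b * q ^ (n + 1) ≠ 0) (M : ℕ) :
    (1 - t) * fineSum a b t q (M + 1) =
      1 + (b - a) * t * q / (1 - b * q) * fineSum a (b * q) (t * q) q M -
        qPoch (a * q) q M / qPoch (b * q) q M * t ^ (M + 1) := by
  induction M with
  | zero => simp [fineSum]
  | succ M ih =>
    have hb₀ : 1 - b * q ≠ 0 := by simpa using hb 0
    have hbM := hb M
    have hP := qPoch_mul_ne_zero hb M
    have hterm : (b - a) * t * q / (1 - b * q) *
        (qPoch (a * q) q M / qPoch (b * q * q) q M * (t * q) ^ M) =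
        (b - a) * q ^ (M + 1) * t ^ (M + 1) * qPoch (a * q) q M /
          (qPoch (b * q) q M * (1 - b * q ^ (M + 1))) := by
      rw [pow_succ' q, ← mul_assoc b, ← one_sub_mul_qPoch_mul]; field
    rw [fineSum_succ, mul_add, ih, fineSum_succ _ _ _ M, mul_add (_ / _), hterm, qPoch_mul_succ,
      qPoch_mul_succ]
    field

theorem one_sub_mul_fineSum (hb : ∀ n, 1 - b * q ^ (n + 1) ≠ 0) (M : ℕ) :
    (1 - t) * fineSum a b t q M =
      1 - a * t * q + (1 - a * q) * (b - a * t * q) * t * q / (1 - b * q) *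
        fineSum (a * q) (b * q) (t * q) q M -
      qPoch (a * q) q M / qPoch (b * q) q M * t ^ M * (1 - a * t * q ^ (M + 1)) := by
  induction M with
  | zero => simp [fineSum]
  | succ M ih =>
    have hbM := hb M
    have hP := qPoch_mul_ne_zero hb M
    have hterm : (1 - a * q) * (b - a * t * q) * t * q / (1 - b * q) *
        (qPoch (a * q * q) q M / qPoch (b * q * q) q M * (t * q) ^ M) =
        (b - a * t * q) * q ^ (M + 1) * t ^ (M + 1) *
          (qPoch (a * q) q M * (1 - a * q ^ (M + 1))) /
          (qPoch (b * q) q M * (1 - b * q ^ (M + 1))) := by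
      rw [pow_succ' q, ← mul_assoc a, ← mul_assoc b, ← one_sub_mul_qPoch_mul,
        ← one_sub_mul_qPoch_mul]
      field
    rw [fineSum_succ, mul_add, ih, fineSum_succ _ _ _ M, mul_add (_ / _), hterm, qPoch_mul_succ,
      qPoch_mul_succ]
    field

end Fine

section RankSum

variable {K Γ₀ : Type*} [Field K] [LinearOrderedCommGroupWithZero Γ₀] {v : Valuation K Γ₀}
  {q z w : K}

/-- The generating function `∑ z ^ largest part * w ^ number of parts * q ^ size` of overpartitions
with largest part at most `M`, for `z * w = 1`; the `m`-th summand collects those with largest part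
`m + 1`. -/
def rankSum (z w q : K) (M : ℕ) : K :=
  1 + 2 * ∑ m ∈ range M,
    z ^ m * q ^ (m + 1) * qPoch (-w * q) q m / qPoch (w * q) q (m + 1)

/-- The coefficient `(-1; q)ₙ q ^ (n (n + 1) / 2)` in Lovejoy's series
`∑ₙ (-1; q)ₙ q ^ (n (n + 1) / 2) / ((zq; q)ₙ (wq; q)ₙ)` for the overpartition rank. -/
def lovejoyCoeff (q : K) (n : ℕ) : K :=
  qPoch (-1) q n * q ^ (n + 1).choose 2

theorem rankSum_eq_fineSum (z w q : K) (M : ℕ) :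
    rankSum z w q M = 1 + 2 * q / (1 - w * q) * fineSum (-w) (w * q) (z * q) q M := by
  rw [rankSum, fineSum, mul_sum, mul_sum]
  congr 1
  refine sum_congr rfl fun m _ => ?_
  rw [qPoch_succ']
  simp only [div_eq_mul_inv, mul_inv]
  ring

@[simp]
theorem lovejoyCoeff_zero (q : K) : lovejoyCoeff q 0 = 1 := by
  simp [lovejoyCoeff]

theorem lovejoyCoeff_succ (q : K) (n : ℕ) :
    lovejoyCoeff q (n + 1) = lovejoyCoeff q n * (1 + q ^ n) * q ^ (n + 1) := by
  simp only [lovejoyCoeff, qPoch_succ, Nat.choose_succ_succ' (n + 1) 1, Nat.choose_one_right]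
  ring

theorem lovejoyCoeff_mem_powIdeal (hq : v q < 1) (n : ℕ) : lovejoyCoeff q n ∈ powIdeal v q n :=
  mul_pow_mem_powIdeal hq (valuation_qPoch_le_one hq (by simp) n) <| by
    simp [Nat.choose_succ_succ' n 1]

theorem lovejoyCoeff_mul_fineSum (hz : ∀ n, 1 - z * q ^ (n + 1) ≠ 0)
    (hw : ∀ n, 1 - w * q ^ (n + 1) ≠ 0) (hzw : z * w = 1) (k N : ℕ) :
    lovejoyCoeff q (k + 1) / (qPoch (z * q) q k * qPoch (w * q) q (k + 1)) *
        fineSum (-w) (w * q ^ (k + 1)) (z * q ^ (k + 1)) q (N + 1) =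
      lovejoyCoeff q (k + 1) / (qPoch (z * q) q (k + 1) * qPoch (w * q) q (k + 1)) +
      lovejoyCoeff q (k + 2) / (qPoch (z * q) q (k + 1) * qPoch (w * q) q (k + 2)) *
        fineSum (-w) (w * q ^ (k + 2)) (z * q ^ (k + 2)) q N -
      lovejoyCoeff q (k + 1) / (qPoch (z * q) q (k + 1) * qPoch (w * q) q (k + 1)) *
        (qPoch (-w * q) q N / qPoch (w * q ^ (k + 2)) q N * (z * q ^ (k + 1)) ^ (N + 1)) := by
  have fine := one_sub_mul_fineSum_succ (-w) (z * q ^ (k + 1)) (b := w * q ^ (k + 1)) (q := q)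
    (fun n => by simpa only [mul_assoc, ← pow_add, add_assoc] using hw (k + 1 + n)) N
  have hcoeff : (w * q ^ (k + 1) - -w) * (z * q ^ (k + 1)) * q =
      (1 + q ^ (k + 1)) * q ^ (k + 2) := by
    linear_combination (1 + q ^ (k + 1)) * q ^ (k + 2) * hzw
  have hzk := hz k
  have hwk := hw (k + 1)
  have hZ := qPoch_mul_ne_zero hz k
  have hW := qPoch_mul_ne_zero hw (k + 1)
  rw [hcoeff] at fine
  simp only [mul_assoc w, mul_assoc z, ← pow_succ] at fine
  rw [eq_div_of_mul_eq hzk ((mul_comm _ _).trans fine), lovejoyCoeff_succ q (k + 1),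
    qPoch_mul_succ z, qPoch_mul_succ w q (k + 1)]
  field

theorem rankSum_smodEq_sum_lovejoyCoeff (hq : v q < 1) (hz : v z ≤ 1) (hw : v w ≤ 1)
    (hzw : z * w = 1) (M : ℕ) :
    rankSum z w q M ≡ ∑ n ∈ range (M + 1),
      lovejoyCoeff q n / (qPoch (z * q) q n * qPoch (w * q) q n) [SMOD powIdeal v q (M + 1)] := by
  set tail : ℕ → K := fun k =>
    lovejoyCoeff q (k + 1) / (qPoch (z * q) q k * qPoch (w * q) q (k + 1)) *
      fineSum (-w) (w * q ^ (k + 1)) (z * q ^ (k + 1)) q (M - k) with htail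
  have step : ∀ k < M, tail k ≡
      lovejoyCoeff q (k + 1) / (qPoch (z * q) q (k + 1) * qPoch (w * q) q (k + 1)) + tail (k + 1)
        [SMOD powIdeal v q (M + 1)] := by
    intro k hk
    obtain ⟨N, rfl⟩ := Nat.exists_eq_add_of_lt hk
    simp only [htail, show k + N + 1 - k = N + 1 by lia, show k + N + 1 - (k + 1) = N by lia]
    rw [lovejoyCoeff_mul_fineSum (fun n => one_sub_mul_pow_ne_zero hq hz n.succ_ne_zero)
      (fun n => one_sub_mul_pow_ne_zero hq hw n.succ_ne_zero) hzw]
    have hunit : v (qPoch (z * q) q (k + 1) * qPoch (w * q) q (k + 1)) = 1 := by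
      simp [valuation_qPoch_mul hq hz, valuation_qPoch_mul hq hw]
    have hunit' : v (qPoch (-w * q) q N / qPoch (w * q ^ (k + 2)) q N) ≤ 1 := by
      rw [pow_succ q, ← mul_assoc, map_div₀, valuation_qPoch_mul hq (by simpa using hw),
        valuation_qPoch_mul hq (valuation_mul_pow_le_one hq hw _), div_one]
    have htpow : (z * q ^ (k + 1)) ^ (N + 1) ∈ powIdeal v q ((k + 1) * (N + 1)) := by
      rw [mul_pow, ← pow_mul]
      exact mul_pow_mem_powIdeal hq (by simpa using pow_le_one' hz _) le_rfl
    refine smodEq_sub_of_mem (powIdeal_antitone hq ?_ <| mul_mem_powIdeal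
      (div_mem_powIdeal hunit (lovejoyCoeff_mem_powIdeal hq _)) <|
        mul_mem_powIdeal_left hunit' htpow)
    nlinarith
  have hfirst : rankSum z w q M = 1 + tail 0 := by
    simp [rankSum_eq_fineSum, htail, lovejoyCoeff_succ, qPoch_succ, one_add_one_eq_two]
  have hlast : tail M = 0 := by simp [htail, fineSum]
  have hsum := smodEq_sum_of_smodEq_add step
  rw [hlast, add_zero] at hsum
  rw [hfirst, sum_range_succ', add_comm 1]
  simpa using hsum.add (SModEq.refl 1)

/-- The coefficient of Fine's function in the `k`-th step of the Rogers–Fine iteration. -/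
def rogersFineCoeff (z w q : K) (k : ℕ) : K :=
  q ^ (k + 1) ^ 2 * qPoch (-z * q) q k * qPoch (-w * q) q k /
    (qPoch (z * q) q k * qPoch (w * q) q (k + 1))

theorem rogersFineCoeff_succ (z w q : K) (k : ℕ) :
    rogersFineCoeff z w q (k + 1) = rogersFineCoeff z w q k * q ^ (2 * k + 3) *
      ((1 + z * q ^ (k + 1)) * (1 + w * q ^ (k + 1))) /
        ((1 - z * q ^ (k + 1)) * (1 - w * q ^ (k + 2))) := by
  simp only [rogersFineCoeff, qPoch_mul_succ, div_eq_mul_inv, mul_inv]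
  ring

theorem rogersFineCoeff_mem_powIdeal (hq : v q < 1) (hz : v z ≤ 1) (hw : v w ≤ 1) (k : ℕ) :
    rogersFineCoeff z w q k ∈ powIdeal v q ((k + 1) ^ 2) := by
  have hnum : v (qPoch (-z * q) q k * qPoch (-w * q) q k) = 1 := by
    simp [-neg_mul, valuation_qPoch_mul hq, hz, hw]
  refine div_mem_powIdeal (by simp [valuation_qPoch_mul hq, hz, hw]) ?_
  rw [mul_assoc, mul_comm]
  exact mul_pow_mem_powIdeal hq hnum.le le_rfl

theorem rogersFineCoeff_mul_fineSum (hz : ∀ n, 1 - z * q ^ (n + 1) ≠ 0)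
    (hw : ∀ n, 1 - w * q ^ (n + 1) ≠ 0) (hzw : z * w = 1) (k M : ℕ) :
    rogersFineCoeff z w q k * fineSum (-w * q ^ k) (w * q ^ (k + 1)) (z * q ^ (k + 1)) q M =
      rogersFineCoeff z w q k * (1 + q ^ (2 * (k + 1))) / (1 - z * q ^ (k + 1)) +
      rogersFineCoeff z w q (k + 1) *
        fineSum (-w * q ^ (k + 1)) (w * q ^ (k + 2)) (z * q ^ (k + 2)) q M -
      rogersFineCoeff z w q k / (1 - z * q ^ (k + 1)) *
        (qPoch (-w * q ^ (k + 1)) q M / qPoch (w * q ^ (k + 2)) q M * (z * q ^ (k + 1)) ^ M *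
          (1 + q ^ (2 * (k + 1) + M))) := by
  have fine := one_sub_mul_fineSum (-w * q ^ k) (z * q ^ (k + 1)) (b := w * q ^ (k + 1)) (q := q)
    (fun n => by simpa only [mul_assoc, ← pow_add, add_assoc] using hw (k + 1 + n)) M
  have hbase : 1 - -w * q ^ k * (z * q ^ (k + 1)) * q = 1 + q ^ (2 * (k + 1)) := by
    linear_combination q ^ (2 * (k + 1)) * hzw
  have hcoeff : (1 - -w * q ^ k * q) * (w * q ^ (k + 1) - -w * q ^ k * (z * q ^ (k + 1)) * q) *
      (z * q ^ (k + 1)) * q =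
      (1 + w * q ^ (k + 1)) * (1 + z * q ^ (k + 1)) * q ^ (2 * k + 3) := by
    linear_combination (1 + w * q ^ (k + 1)) * q ^ (2 * k + 3) * (1 + z * q ^ (k + 1)) * hzw
  have herr : 1 - -w * q ^ k * (z * q ^ (k + 1)) * q ^ (M + 1) = 1 + q ^ (2 * (k + 1) + M) := by
    linear_combination q ^ (2 * (k + 1) + M) * hzw
  have hzk := hz k
  have hwk := hw (k + 1)
  rw [hbase, herr, hcoeff] at fine
  simp only [mul_assoc w, mul_assoc z, mul_assoc (-w), ← pow_succ] at fine
  rw [eq_div_of_mul_eq hzk ((mul_comm _ _).trans fine), rogersFineCoeff_succ]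
  field

theorem valuation_fineSum_le_one {a b t : K} (hq : v q < 1) (ha : v a ≤ 1) (hb : v b ≤ 1)
    (ht : v t ≤ 1) (M : ℕ) : v (fineSum a b t q M) ≤ 1 :=
  v.map_sum_le fun m _ => by
    simpa [valuation_qPoch_mul hq, ha, hb] using pow_le_one' ht m

theorem rankSum_smodEq_sum_rogersFineCoeff (hq : v q < 1) (hz : v z ≤ 1) (hw : v w ≤ 1)
    (hzw : z * w = 1) (M : ℕ) :
    rankSum z w q M ≡ 1 + 2 * ∑ k ∈ range M,
      rogersFineCoeff z w q k * (1 + q ^ (2 * (k + 1))) / (1 - z * q ^ (k + 1))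
        [SMOD powIdeal v q (M + 1)] := by
  set tail : ℕ → K := fun k => rogersFineCoeff z w q k *
    fineSum (-w * q ^ k) (w * q ^ (k + 1)) (z * q ^ (k + 1)) q M with htail
  have hw' : v (-w) ≤ 1 := by simpa using hw
  have step : ∀ k < M, tail k ≡ rogersFineCoeff z w q k * (1 + q ^ (2 * (k + 1))) /
      (1 - z * q ^ (k + 1)) + tail (k + 1) [SMOD powIdeal v q (M + 1)] := by
    intro k _
    simp only [htail]
    rw [rogersFineCoeff_mul_fineSum (fun n => one_sub_mul_pow_ne_zero hq hz n.succ_ne_zero)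
      (fun n => one_sub_mul_pow_ne_zero hq hw n.succ_ne_zero) hzw]
    have hunit : v (1 - z * q ^ (k + 1)) = 1 := valuation_one_sub_mul_pow hq hz k.succ_ne_zero
    have hratio : v (qPoch (-w * q ^ (k + 1)) q M / qPoch (w * q ^ (k + 2)) q M) ≤ 1 := by
      rw [pow_succ, pow_succ q (k + 1), ← mul_assoc, ← mul_assoc, map_div₀,
        valuation_qPoch_mul hq (valuation_mul_pow_le_one hq hw' _),
        valuation_qPoch_mul hq (valuation_mul_pow_le_one hq hw _), div_one]
    have htpow : (z * q ^ (k + 1)) ^ M ∈ powIdeal v q ((k + 1) * M) := by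
      rw [mul_pow, ← pow_mul]
      exact mul_pow_mem_powIdeal hq (by simpa using pow_le_one' hz _) le_rfl
    refine smodEq_sub_of_mem (powIdeal_antitone hq ?_ <| mul_mem_powIdeal
      (div_mem_powIdeal hunit (rogersFineCoeff_mem_powIdeal hq hz hw _)) <|
      mul_mem_powIdeal_right (mul_mem_powIdeal_left hratio htpow)
        (valuation_one_add_pow hq (by simp)).le)
    nlinarith
  have hfirst : rankSum z w q M = 1 + 2 * tail 0 := by
    simp [rankSum_eq_fineSum, htail, rogersFineCoeff, qPoch_succ, div_eq_mul_inv, mul_assoc]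
  have hlast : tail M ∈ powIdeal v q (M + 1) := by
    refine powIdeal_antitone hq (by nlinarith) <| mul_mem_powIdeal_right
      (rogersFineCoeff_mem_powIdeal hq hz hw M) (valuation_fineSum_le_one hq ?_ ?_ ?_ M)
    exacts [valuation_mul_pow_le_one hq hw' M, valuation_mul_pow_le_one hq hw _,
      valuation_mul_pow_le_one hq hz _]
  rw [hfirst]
  exact SModEq.rfl.add (smodEq_mul_left (valuation_ofNat_le_one 2)
    ((smodEq_sum_of_smodEq_add step).trans (smodEq_add_of_mem hlast)))

/-- The partial theta series `∑_{|d| ≤ M} q ^ (d²)`, folded over the sign of `d`. -/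
def thetaSum {R : Type*} [CommRing R] (q : R) (M : ℕ) : R :=
  1 + 2 * ∑ k ∈ range M, q ^ (k + 1) ^ 2

theorem map_thetaSum {R S : Type*} [CommRing R] [CommRing S] (φ : R →+* S) (q : R) (M : ℕ) :
    φ (thetaSum q M) = thetaSum (φ q) M := by
  simp only [thetaSum, map_add, map_one, map_mul, map_ofNat, map_sum, map_pow]

theorem valuation_thetaSum (hq : v q < 1) (M : ℕ) : v (thetaSum q M) = 1 := by
  have hmem : 2 * ∑ k ∈ range M, q ^ (k + 1) ^ 2 ∈ powIdeal v q 1 :=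
    mul_mem_powIdeal_left (valuation_ofNat_le_one 2) <| sum_mem fun k _ =>
      pow_mem_powIdeal hq (Nat.one_le_pow _ _ k.succ_pos)
  exact v.map_one_add_of_lt ((mem_powIdeal.1 hmem).trans_lt (by simpa using hq))

theorem rankSum_smodEq_thetaSum (hq : v q < 1) (hz : v z ≤ 1) (hw : v w ≤ 1) (hzw : z * w = 1)
    (hadd : z + w = 0) (M : ℕ) :
    rankSum z w q M ≡ thetaSum q M [SMOD powIdeal v q (M + 1)] := by
  have hcoeff (k : ℕ) : rogersFineCoeff z w q k * (1 + q ^ (2 * (k + 1))) /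
      (1 - z * q ^ (k + 1)) = q ^ (k + 1) ^ 2 := by
    have hzk : 1 - z * q ^ (k + 1) ≠ 0 := one_sub_mul_pow_ne_zero hq hz k.succ_ne_zero
    have hwk : 1 - w * q ^ (k + 1) ≠ 0 := one_sub_mul_pow_ne_zero hq hw k.succ_ne_zero
    have hZ := qPoch_mul_ne_zero (fun n => one_sub_mul_pow_ne_zero hq hz n.succ_ne_zero) k
    have hW := qPoch_mul_ne_zero (fun n => one_sub_mul_pow_ne_zero hq hw n.succ_ne_zero) k
    have hprod : 1 + q ^ (2 * (k + 1)) = (1 - z * q ^ (k + 1)) * (1 - w * q ^ (k + 1)) := by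
      linear_combination q ^ (k + 1) * hadd - q ^ (2 * (k + 1)) * hzw
    rw [hprod, rogersFineCoeff, qPoch_mul_succ, neg_eq_of_add_eq_zero_right hadd,
      neg_eq_of_add_eq_zero_left hadd]
    generalize qPoch (z * q) q k = Z, 1 - z * q ^ (k + 1) = A at *
    generalize qPoch (w * q) q k = W, 1 - w * q ^ (k + 1) = B at *
    field
  simpa only [hcoeff, thetaSum] using rankSum_smodEq_sum_rogersFineCoeff hq hz hw hzw M

end RankSum

section BaileyKernel

variable {K : Type*} [Field K] {q : K}

/-- The kernel `1 / ((q; q)ₙ₋ᵣ (q; q)ₙ₊ᵣ)` of Bailey's transform, which vanishes for `n < r`. -/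
def baileyKernel (q : K) (n r : ℕ) : K :=
  if r ≤ n then (qPoch q q (n - r) * qPoch q q (n + r))⁻¹ else 0

/-- The sequence `α` of the unit Bailey pair. -/
def unitWeight (q : K) (r : ℕ) : K :=
  if r = 0 then 1 else (-1) ^ r * q ^ r.choose 2 * (1 + q ^ r)

@[simp]
theorem unitWeight_zero (q : K) : unitWeight q 0 = 1 :=
  if_pos rfl

theorem unitWeight_succ (q : K) (r : ℕ) :
    unitWeight q (r + 1) = (-1) ^ (r + 1) * q ^ (r + 1).choose 2 * (1 + q ^ (r + 1)) :=
  if_neg r.succ_ne_zero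

theorem qPoch_self_succ (q : K) (n : ℕ) : qPoch q q (n + 1) = qPoch q q n * (1 - q ^ (n + 1)) := by
  rw [qPoch_succ, ← pow_succ']

theorem baileyKernel_add (q : K) (r k : ℕ) :
    baileyKernel q (r + k) r = (qPoch q q k * qPoch q q (r + k + r))⁻¹ := by
  simp [baileyKernel]

theorem baileyKernel_of_lt {n r : ℕ} (h : n < r) : baileyKernel q n r = 0 :=
  if_neg h.not_ge

theorem baileyKernel_zero_right (q : K) (n : ℕ) : baileyKernel q n 0 = (qPoch q q n ^ 2)⁻¹ := by
  simp [baileyKernel, sq]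

theorem baileyKernel_succ_left (hq : ∀ n, 1 - q ^ (n + 1) ≠ 0) {n r : ℕ} (hr : r ≤ n + 1) :
    (1 - q ^ (n + 1 - r)) * (1 - q ^ (n + 1 + r)) * baileyKernel q (n + 1) r =
      baileyKernel q n r := by
  obtain rfl | hr := hr.eq_or_lt
  · simp [baileyKernel_of_lt]
  obtain ⟨k, rfl⟩ := Nat.exists_eq_add_of_le (Nat.le_of_lt_succ hr)
  have h₁ := hq k
  have h₂ := hq (r + k + r)
  rw [add_assoc, baileyKernel_add, baileyKernel_add, Nat.add_sub_cancel_left, qPoch_self_succ,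
    show r + (k + 1) + r = r + k + r + 1 by lia, qPoch_self_succ]
  field

theorem baileyKernel_succ_right (hq : ∀ n, 1 - q ^ (n + 1) ≠ 0) {n r : ℕ} (hr : r ≤ n) :
    (1 - q ^ (n + r + 1)) * baileyKernel q n (r + 1) = (1 - q ^ (n - r)) * baileyKernel q n r := by
  obtain rfl | hr := hr.eq_or_lt
  · simp [baileyKernel_of_lt]
  obtain ⟨k, rfl⟩ := Nat.exists_eq_add_of_lt hr
  have h₁ := hq k
  have h₂ := hq (r + k + 1 + r)
  rw [show r + k + 1 = r + (k + 1) by lia, baileyKernel_add, Nat.add_sub_cancel_left,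
    qPoch_self_succ q k, show r + (k + 1) = r + 1 + k by lia, baileyKernel_add,
    show r + 1 + k + (r + 1) = r + k + 1 + r + 1 by lia, qPoch_self_succ,
    show r + 1 + k + r = r + k + 1 + r by lia]
  field

theorem one_sub_pow_mul_sum_unitWeight_mul_baileyKernel (hq : ∀ n, 1 - q ^ (n + 1) ≠ 0) {n R : ℕ}
    (hR : R ≤ n) :
    (1 - q ^ n) * ∑ r ∈ range (R + 1), unitWeight q r * baileyKernel q n r =
      (-1) ^ R * q ^ (R + 1).choose 2 * (1 - q ^ (n - R)) * baileyKernel q n R := by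
  induction R with
  | zero => simp
  | succ R ih =>
    have hpow : q ^ n = q ^ (R + 1) * q ^ (n - (R + 1)) := by
      rw [← pow_add, Nat.add_sub_cancel' hR]
    rw [sum_range_succ, mul_add, ih (by lia), mul_assoc, ← baileyKernel_succ_right hq (by lia),
      unitWeight_succ, Nat.choose_succ_succ' (R + 1) 1, Nat.choose_one_right,
      add_assoc n, pow_add q n, hpow]
    ring

theorem sum_unitWeight_mul_baileyKernel (hq : ∀ n, 1 - q ^ (n + 1) ≠ 0) (n : ℕ) :
    ∑ r ∈ range (n + 1), unitWeight q r * baileyKernel q n r = if n = 0 then 1 else 0 := by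
  cases n with
  | zero => simp [baileyKernel]
  | succ n =>
    have := one_sub_pow_mul_sum_unitWeight_mul_baileyKernel hq (le_refl (n + 1))
    simpa [hq n] using this

end BaileyKernel

section Appell

variable {K : Type*} [Field K] {q u : K}

/-- The denominator `(1 - z qʳ) (1 - w qʳ)` of the Appell–Lerch sums below, for `z * w = 1` and
`u = (1 - z) (1 - w)`. -/
def appellDenom (u q : K) (r : ℕ) : K :=
  (1 - q ^ r) ^ 2 + u * q ^ r

/-- The sum `∑_{0 < r ≤ n} qʳ αᵣ / ((1 - qʳ)² + u qʳ) / ((q; q)ₙ₋ᵣ (q; q)ₙ₊ᵣ)` over the unit Bailey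
pair `α`. -/
def appellSum (u q : K) (n : ℕ) : K :=
  ∑ r ∈ range n, q ^ (r + 1) * unitWeight q (r + 1) / appellDenom u q (r + 1) *
    baileyKernel q n (r + 1)

theorem appellDenom_mul_appellSum_succ (hq : ∀ n, 1 - q ^ (n + 1) ≠ 0)
    (hu : ∀ n, appellDenom u q (n + 1) ≠ 0) (n : ℕ) :
    appellDenom u q (n + 1) * appellSum u q (n + 1) =
      appellSum u q n - q ^ (n + 1) / qPoch q q (n + 1) ^ 2 := by
  have hterm (r : ℕ) (hr : r ∈ range (n + 1)) : appellDenom u q (n + 1) *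
      (q ^ (r + 1) * unitWeight q (r + 1) / appellDenom u q (r + 1) *
        baileyKernel q (n + 1) (r + 1)) =
      q ^ (n + 1) * (unitWeight q (r + 1) * baileyKernel q (n + 1) (r + 1)) +
      q ^ (r + 1) * unitWeight q (r + 1) / appellDenom u q (r + 1) * baileyKernel q n (r + 1) := by
    obtain ⟨k, rfl⟩ := Nat.exists_eq_add_of_le (Nat.le_of_lt_succ (mem_range.1 hr))
    have hcross : appellDenom u q (r + k + 1) * q ^ (r + 1) =
        appellDenom u q (r + 1) * q ^ (r + k + 1) +
          q ^ (r + 1) * ((1 - q ^ (r + k + 1 - (r + 1))) * (1 - q ^ (r + k + 1 + (r + 1)))) := by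
      rw [show r + k + 1 - (r + 1) = k by lia, appellDenom, appellDenom]
      ring
    rw [← baileyKernel_succ_left hq (show r + 1 ≤ r + k + 1 by lia)]
    have := hu r
    field_simp
    linear_combination unitWeight q (r + 1) * baileyKernel q (r + k + 1) (r + 1) * hcross
  have hunit : ∑ r ∈ range (n + 1), unitWeight q (r + 1) * baileyKernel q (n + 1) (r + 1) =
      -(qPoch q q (n + 1) ^ 2)⁻¹ := by
    have := sum_unitWeight_mul_baileyKernel hq (n + 1)
    rw [sum_range_succ', baileyKernel_zero_right] at this
    simpa [← eq_neg_iff_add_eq_zero] using this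
  rw [appellSum, mul_sum, sum_congr rfl hterm, sum_add_distrib, ← mul_sum, hunit, sum_range_succ,
    baileyKernel_of_lt n.lt_succ_self, appellSum]
  ring

theorem mul_appellSum_add (hq : ∀ n, 1 - q ^ (n + 1) ≠ 0)
    (hu : ∀ n, appellDenom u q (n + 1) ≠ 0) (n : ℕ) :
    u * appellSum u q n + (qPoch q q n ^ 2)⁻¹ = (∏ t ∈ range n, appellDenom u q (t + 1))⁻¹ := by
  induction n with
  | zero => simp [appellSum]
  | succ n ih =>
    have hun := hu n
    have hqn := hq n
    rw [prod_range_succ, mul_inv, ← ih, eq_mul_inv_iff_mul_eq₀ hun]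
    have := appellDenom_mul_appellSum_succ hq hu n
    rw [qPoch_self_succ] at this ⊢
    rw [add_mul, mul_assoc, mul_comm (appellSum _ _ _), this, appellDenom]
    field

theorem sq_qPoch_mul_appellSum_zero (hq : ∀ n, 1 - q ^ (n + 1) ≠ 0) (n : ℕ) :
    qPoch q q n ^ 2 * appellSum 0 q n = -∑ t ∈ range n, q ^ (t + 1) / (1 - q ^ (t + 1)) ^ 2 := by
  induction n with
  | zero => simp [appellSum]
  | succ n ih =>
    have hqn := hq n
    have hP : qPoch q q n ≠ 0 := by
      simpa using qPoch_mul_ne_zero (b := (1 : K)) (q := q) (by simpa using hq) n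
    have := appellDenom_mul_appellSum_succ hq (u := 0) (by simpa [appellDenom] using hq) n
    rw [appellDenom, zero_mul, add_zero, qPoch_self_succ] at this
    rw [sum_range_succ, neg_add, ← ih, qPoch_self_succ, mul_pow, mul_assoc, this]
    field

end Appell

section ConjugatePair

variable {K Γ₀ : Type*} [Field K] [LinearOrderedCommGroupWithZero Γ₀] {v : Valuation K Γ₀} {q : K}

/-- The sequence `γᵣ = ∑ₙ δₙ / ((q; q)ₙ₋ᵣ (q; q)ₙ₊ᵣ)` conjugate to `δ = lovejoyCoeff q`, truncated
at `n = M`. -/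
def conjugateSum (q : K) (M r : ℕ) : K :=
  ∑ n ∈ range (M + 1), lovejoyCoeff q n * baileyKernel q n r

theorem sum_lovejoyCoeff_mul_sum_baileyKernel (q : K) (a : ℕ → K) (M : ℕ) :
    ∑ n ∈ range (M + 1), lovejoyCoeff q n * ∑ r ∈ range (n + 1), a r * baileyKernel q n r =
      ∑ r ∈ range (M + 1), a r * conjugateSum q M r := by
  have hext (n : ℕ) (hn : n ∈ range (M + 1)) :
      ∑ r ∈ range (n + 1), a r * baileyKernel q n r =
        ∑ r ∈ range (M + 1), a r * baileyKernel q n r :=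
    sum_subset (range_subset_range.2 (mem_range.1 hn)) fun r _ hr => by
      rw [baileyKernel_of_lt (by simpa using hr), mul_zero]
  rw [sum_congr rfl fun n hn => congrArg (lovejoyCoeff q n * ·) (hext n hn)]
  simp only [conjugateSum, mul_sum, mul_left_comm (lovejoyCoeff _ _)]
  exact sum_comm

theorem lovejoyCoeff_mul_baileyKernel_succ_right (hq : ∀ n, 1 - q ^ (n + 1) ≠ 0) (n r : ℕ) :
    (1 + q ^ (r + 1)) * (lovejoyCoeff q n * baileyKernel q n (r + 1)) =
      q ^ (r + 1) * ((1 + q ^ r) * (lovejoyCoeff q n * baileyKernel q n r)) +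
      ((1 - q ^ (2 * r + 1)) * lovejoyCoeff q n * (1 - q ^ (n - r)) * baileyKernel q n r -
        (1 - q ^ (2 * r + 1)) * lovejoyCoeff q (n + 1) * (1 - q ^ (n + 1 - r)) *
          baileyKernel q (n + 1) r) := by
  obtain hnr | hnr := lt_or_ge n r
  · rw [baileyKernel_of_lt hnr, baileyKernel_of_lt (hnr.trans r.lt_succ_self),
      Nat.sub_eq_zero_of_le hnr]
    simp
  have hleft := baileyKernel_succ_left hq (Nat.le_succ_of_le hnr)
  have hright := baileyKernel_succ_right hq hnr
  obtain ⟨j, rfl⟩ := Nat.exists_eq_add_of_le hnr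
  rw [show r + j + 1 - r = j + 1 by lia, Nat.add_sub_cancel_left] at *
  refine mul_left_cancel₀ (hq (r + j + r)) ?_
  rw [lovejoyCoeff_succ]
  linear_combination (1 + q ^ (r + 1)) * lovejoyCoeff q (r + j) * hright +
    (1 - q ^ (2 * r + 1)) * (lovejoyCoeff q (r + j) * (1 + q ^ (r + j)) * q ^ (r + j + 1)) * hleft

theorem valuation_baileyKernel_le_one (hq : v q < 1) (n r : ℕ) : v (baileyKernel q n r) ≤ 1 := by
  rw [baileyKernel]
  split_ifs <;> simp [valuation_qPoch_self hq]

theorem one_add_pow_mul_conjugateSum_smodEq (hq : v q < 1) (M r : ℕ) :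
    (1 + q ^ r) * conjugateSum q M r ≡ 2 * q ^ (r + 1).choose 2 * conjugateSum q M 0
      [SMOD powIdeal v q (M + 1)] := by
  induction r with
  | zero => simp [one_add_one_eq_two]
  | succ r ih =>
    have hmem : (1 - q ^ (2 * r + 1)) * lovejoyCoeff q (M + 1) * (1 - q ^ (M + 1 - r)) *
        baileyKernel q (M + 1) r ∈ powIdeal v q (M + 1) := by
      have hsub (n : ℕ) : v (1 - q ^ n) ≤ 1 :=
        v.map_sub_le v.map_one.le (by simpa using pow_le_one' hq.le n)
      exact mul_mem_powIdeal_right (mul_mem_powIdeal_right (mul_mem_powIdeal_left (hsub _)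
        (lovejoyCoeff_mem_powIdeal hq _)) (hsub _)) (valuation_baileyKernel_le_one hq _ _)
    have hrec : (1 + q ^ (r + 1)) * conjugateSum q M (r + 1) =
        q ^ (r + 1) * ((1 + q ^ r) * conjugateSum q M r) - (1 - q ^ (2 * r + 1)) *
          lovejoyCoeff q (M + 1) * (1 - q ^ (M + 1 - r)) * baileyKernel q (M + 1) r := by
      simp only [conjugateSum, mul_sum, lovejoyCoeff_mul_baileyKernel_succ_right
        (one_sub_pow_succ_ne_zero hq), sum_add_distrib]
      rw [sum_range_sub']
      simp [sub_eq_add_neg]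
    rw [hrec, Nat.choose_succ_succ' (r + 1) 1, Nat.choose_one_right, pow_add q (r + 1),
      mul_left_comm 2, mul_assoc (q ^ (r + 1)) (2 * _)]
    exact (smodEq_sub_of_mem hmem).trans
      (smodEq_mul_left (by simpa using pow_le_one' hq.le (r + 1)) ih)

theorem choose_two_add_choose_two_succ (n : ℕ) : n.choose 2 + (n + 1).choose 2 = n ^ 2 := by
  induction n with
  | zero => simp
  | succ n ih =>
    rw [Nat.choose_succ_succ' (n + 1) 1, Nat.choose_succ_succ' n 1, Nat.choose_one_right] at *
    rw [Nat.choose_one_right]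
    linarith

theorem unitWeight_mul_conjugateSum_smodEq (hq : v q < 1) (M r : ℕ) :
    unitWeight q (r + 1) * conjugateSum q M (r + 1) ≡
      2 * (-1) ^ (r + 1) * q ^ (r + 1) ^ 2 * conjugateSum q M 0 [SMOD powIdeal v q (M + 1)] := by
  have := smodEq_mul_left (c := (-1) ^ (r + 1) * q ^ (r + 1).choose 2)
    (by simpa using pow_le_one' hq.le _) (one_add_pow_mul_conjugateSum_smodEq hq M (r + 1))
  rw [← choose_two_add_choose_two_succ, pow_add]
  convert this using 1
  · rw [unitWeight_succ]
    ring
  · ring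

theorem neg_pow_sq {R : Type*} [CommRing R] (x : R) (n : ℕ) :
    (-x) ^ n ^ 2 = (-1) ^ n * x ^ n ^ 2 := by
  rw [neg_pow, sq, pow_mul]
  obtain h | h := neg_one_pow_eq_or R n <;> simp [h]

theorem conjugateSum_zero_mul_thetaSum_neg_smodEq (hq : v q < 1) (M : ℕ) :
    conjugateSum q M 0 * thetaSum (-q) M ≡ 1 [SMOD powIdeal v q (M + 1)] := by
  have hunit : ∑ r ∈ range (M + 1), unitWeight q r * conjugateSum q M r = 1 := by
    rw [← sum_lovejoyCoeff_mul_sum_baileyKernel]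
    simp [sum_unitWeight_mul_baileyKernel (one_sub_pow_succ_ne_zero hq)]
  rw [← hunit, sum_range_succ', thetaSum, mul_add, mul_one, mul_sum, mul_sum,
    add_comm (conjugateSum q M 0)]
  refine SModEq.add (.sum fun r _ => ?_) (by simp)
  convert (unitWeight_mul_conjugateSum_smodEq hq M r).symm using 1
  rw [neg_pow_sq]
  ring

theorem appellDenom_eq_mul {z w : K} (hzw : z * w = 1) (r : ℕ) :
    appellDenom ((1 - z) * (1 - w)) q r = (1 - z * q ^ r) * (1 - w * q ^ r) := by
  rw [appellDenom]
  linear_combination (q ^ r - q ^ (2 * r)) * hzw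

theorem qPoch_mul_qPoch_eq_prod_appellDenom {z w : K} (hzw : z * w = 1) (n : ℕ) :
    qPoch (z * q) q n * qPoch (w * q) q n =
      ∏ t ∈ range n, appellDenom ((1 - z) * (1 - w)) q (t + 1) := by
  simp only [qPoch, ← prod_mul_distrib, appellDenom_eq_mul hzw, mul_assoc, ← pow_succ']

theorem sum_lovejoyCoeff_div_eq {z w : K} (hq : ∀ n, 1 - q ^ (n + 1) ≠ 0)
    (hu : ∀ n, appellDenom ((1 - z) * (1 - w)) q (n + 1) ≠ 0) (hzw : z * w = 1) (M : ℕ) :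
    ∑ n ∈ range (M + 1), lovejoyCoeff q n / (qPoch (z * q) q n * qPoch (w * q) q n) =
      conjugateSum q M 0 + (1 - z) * (1 - w) * ∑ r ∈ range M, q ^ (r + 1) /
        appellDenom ((1 - z) * (1 - w)) q (r + 1) *
          (unitWeight q (r + 1) * conjugateSum q M (r + 1)) := by
  set u := (1 - z) * (1 - w)
  set a : ℕ → K := fun r => if r = 0 then 1 else u * (q ^ r * unitWeight q r / appellDenom u q r)
  have happell (n : ℕ) : lovejoyCoeff q n / (qPoch (z * q) q n * qPoch (w * q) q n) =
      lovejoyCoeff q n * ∑ r ∈ range (n + 1), a r * baileyKernel q n r := by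
    rw [qPoch_mul_qPoch_eq_prod_appellDenom hzw, div_eq_mul_inv, ← mul_appellSum_add hq hu,
      sum_range_succ', baileyKernel_zero_right, appellSum, mul_sum]
    simp [a, mul_assoc]
  rw [sum_congr rfl fun n _ => happell n, sum_lovejoyCoeff_mul_sum_baileyKernel, sum_range_succ',
    add_comm, mul_sum]
  simp only [a, if_true, one_mul, Nat.succ_ne_zero, if_false]
  congr 1
  refine sum_congr rfl fun r _ => ?_
  ring

theorem rankSum_mul_thetaSum_neg_smodEq {z w : K} (hq : v q < 1) (hz : v z ≤ 1) (hw : v w ≤ 1)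
    (hzw : z * w = 1) (M : ℕ) :
    rankSum z w q M * thetaSum (-q) M ≡ 1 + 2 * ((1 - z) * (1 - w)) * ∑ r ∈ range M,
      (-1) ^ (r + 1) * q ^ ((r + 1) ^ 2 + (r + 1)) / appellDenom ((1 - z) * (1 - w)) q (r + 1)
        [SMOD powIdeal v q (M + 1)] := by
  set u := (1 - z) * (1 - w)
  have hdenom (r : ℕ) : v (appellDenom u q (r + 1)) = 1 := by
    rw [appellDenom_eq_mul hzw, map_mul, valuation_one_sub_mul_pow hq hz r.succ_ne_zero,
      valuation_one_sub_mul_pow hq hw r.succ_ne_zero, one_mul]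
  have hpow (n : ℕ) : v (q ^ n) ≤ 1 := by simpa using pow_le_one' hq.le n
  set S := ∑ r ∈ range M, (-1) ^ (r + 1) * q ^ ((r + 1) ^ 2 + (r + 1)) / appellDenom u q (r + 1)
  have hu : v u ≤ 1 := by
    rw [map_mul]
    exact mul_le_one' (v.map_sub_le v.map_one.le hz) (v.map_sub_le v.map_one.le hw)
  have hS : v (1 + 2 * u * S) ≤ 1 := by
    refine v.map_add_le v.map_one.le ?_
    rw [map_mul, map_mul]
    exact mul_le_one' (mul_le_one' (valuation_ofNat_le_one 2) hu)
      (v.map_sum_le fun r _ => by simpa [hdenom] using hpow _)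
  have hrank : rankSum z w q M ≡ (1 + 2 * u * S) * conjugateSum q M 0
      [SMOD powIdeal v q (M + 1)] := by
    refine (rankSum_smodEq_sum_lovejoyCoeff hq hz hw hzw M).trans ?_
    rw [sum_lovejoyCoeff_div_eq (one_sub_pow_succ_ne_zero hq)
      (fun n => v.ne_zero_iff.1 (by simp [u, hdenom])) hzw, add_mul, one_mul, mul_comm 2 u,
      mul_assoc u, mul_assoc u, mul_sum _ _ 2, sum_mul]
    refine SModEq.rfl.add (smodEq_mul_left hu (.sum fun r _ => ?_))
    convert smodEq_mul_left (c := q ^ (r + 1) / appellDenom u q (r + 1))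
      (by simpa [hdenom] using hpow (r + 1))
      (unitWeight_mul_conjugateSum_smodEq hq M r) using 1
    rw [pow_add]
    ring
  refine (smodEq_mul_right (valuation_thetaSum (by simpa using hq) M).le hrank).trans ?_
  simpa [mul_assoc] using smodEq_mul_left hS (conjugateSum_zero_mul_thetaSum_neg_smodEq hq M)

end ConjugatePair

section Lambert

variable {K Γ₀ : Type*} [Field K] [LinearOrderedCommGroupWithZero Γ₀] {v : Valuation K Γ₀} {q : K}

theorem sq_qPoch_mul_baileyKernel_smodEq (hq : v q < 1) {n r : ℕ} (hr : r ≤ n) :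
    qPoch q q n ^ 2 * baileyKernel q n r ≡ 1 [SMOD powIdeal v q (n + 1 - r)] := by
  induction r with
  | zero => simp [baileyKernel_zero_right, qPoch_self_ne_zero hq]
  | succ r ih =>
    have hunit : v (1 - q ^ (n + r + 1)) = 1 := valuation_one_sub_pow hq (n + r).succ_ne_zero
    have hunit' : 1 - q ^ (n + r + 1) ≠ 0 := one_sub_pow_succ_ne_zero hq (n + r)
    have hrec := baileyKernel_succ_right (one_sub_pow_succ_ne_zero hq) (Nat.le_of_succ_le hr)
    have hsub : v (1 - q ^ (n - r)) = 1 := valuation_one_sub_pow hq (by lia)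
    have hih := SModEq.sub_mem.1 (ih (Nat.le_of_succ_le hr))
    have hdiff : qPoch q q n ^ 2 * baileyKernel q n (r + 1) - 1 =
        ((1 - q ^ (n - r)) * (qPoch q q n ^ 2 * baileyKernel q n r - 1) +
          (q ^ (n + r + 1) - q ^ (n - r))) / (1 - q ^ (n + r + 1)) := by
      rw [eq_div_iff hunit']
      linear_combination qPoch q q n ^ 2 * hrec
    rw [SModEq.sub_mem, hdiff]
    refine div_mem_powIdeal hunit (add_mem (mul_mem_powIdeal_left hsub.le ?_) (sub_mem ?_ ?_))
    exacts [powIdeal_antitone hq (by lia) hih, pow_mem_powIdeal hq (by lia),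
      pow_mem_powIdeal hq (by lia)]

theorem sum_pow_div_sq_smodEq (hq : v q < 1) (n : ℕ) :
    ∑ t ∈ range n, q ^ (t + 1) / (1 - q ^ (t + 1)) ^ 2 ≡
      -∑ r ∈ range n, (-1) ^ (r + 1) * q ^ (r + 2).choose 2 * (1 + q ^ (r + 1)) /
        (1 - q ^ (r + 1)) ^ 2 [SMOD powIdeal v q (n + 1)] := by
  rw [← neg_neg (∑ t ∈ _, _), ← sq_qPoch_mul_appellSum_zero (one_sub_pow_succ_ne_zero hq)]
  refine .neg ?_
  rw [appellSum, mul_sum]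
  refine .sum fun r hr => ?_
  have hone := SModEq.sub_mem.1 (sq_qPoch_mul_baileyKernel_smodEq hq (mem_range.1 hr))
  have hweight : v (unitWeight q (r + 1) / (1 - q ^ (r + 1)) ^ 2) ≤ 1 := by
    simp [unitWeight_succ, valuation_one_sub_pow hq r.succ_ne_zero,
      valuation_one_add_pow hq r.succ_ne_zero, pow_le_one' hq.le]
  rw [SModEq.sub_mem]
  have hmem := mul_mem_powIdeal_left hweight
    (mul_mem_powIdeal (pow_mem_powIdeal hq (le_refl (r + 1))) hone)
  convert hmem using 1
  · congr 1
    have := mem_range.1 hr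
    lia
  · rw [unitWeight_succ, appellDenom, zero_mul, add_zero, Nat.choose_succ_succ' (r + 1) 1,
      Nat.choose_one_right, pow_add q (r + 1)]
    ring

end Lambert

section Coth

variable {K Γ₀ : Type*} [Field K] [LinearOrderedCommGroupWithZero Γ₀] {v : Valuation K Γ₀} {q : K}

/-- The value `(1 + q ^ 2n) / (1 - q ^ 2n)` of the hyperbolic cotangent at `-n log q`. The pole at
`n = 0` is replaced by the value `0`, as suits an odd function. -/
def qCoth (q : K) (n : ℤ) : K :=
  (1 + q ^ (2 * n)) / (1 - q ^ (2 * n))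

@[simp]
theorem qCoth_zero (q : K) : qCoth q 0 = 0 := by
  simp [qCoth]

theorem qCoth_neg (hq₀ : q ≠ 0) (n : ℤ) : qCoth q (-n) = -qCoth q n := by
  have hy : q ^ (2 * n) ≠ 0 := zpow_ne_zero _ hq₀
  rw [qCoth, mul_neg, zpow_neg, ← mul_div_mul_left _ _ hy, mul_sub, mul_add, mul_inv_cancel₀ hy,
    mul_one, ← neg_sub 1 (q ^ _), div_neg, add_comm, qCoth]

theorem one_sub_zpow_ne_zero (hq : v q < 1) (hq₀ : q ≠ 0) {n : ℤ} (hn : n ≠ 0) :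
    1 - q ^ n ≠ 0 := by
  intro h
  refine hn (zpow_right_injective₀ (zero_lt_iff.2 (v.ne_zero_iff.2 hq₀)) hq.ne ?_)
  simp [← map_zpow₀, ← sub_eq_zero.1 h]

theorem qCoth_sub_one (hq : v q < 1) (hq₀ : q ≠ 0) (n : ℤ) :
    qCoth q n - 1 = q ^ (2 * n) * (1 + qCoth q n) - if n = 0 then 2 else 0 := by
  obtain rfl | hn := eq_or_ne n 0
  · norm_num
  have hy := one_sub_zpow_ne_zero hq hq₀ (mul_ne_zero two_ne_zero hn)
  rw [if_neg hn, qCoth]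
  field

theorem qCoth_mul_qCoth (hq : v q < 1) (hq₀ : q ≠ 0) {m n : ℤ} (hm : m ≠ 0) (hn : n ≠ 0)
    (hmn : n ≠ m) : qCoth q m * qCoth q n = 1 + qCoth q (n - m) * (qCoth q m - qCoth q n) := by
  have hx := one_sub_zpow_ne_zero hq hq₀ (mul_ne_zero two_ne_zero hm)
  have hy := one_sub_zpow_ne_zero hq hq₀ (mul_ne_zero two_ne_zero hn)
  have hxy := one_sub_zpow_ne_zero hq hq₀ (mul_ne_zero two_ne_zero (sub_ne_zero.2 hmn))
  have hx₀ : q ^ (2 * m) ≠ 0 := zpow_ne_zero _ hq₀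
  rw [mul_sub, zpow_sub₀ hq₀, one_sub_div hx₀] at hxy
  replace hxy := (div_ne_zero_iff.1 hxy).1
  rw [qCoth, qCoth, qCoth, mul_sub 2 n m, zpow_sub₀ hq₀, one_add_div hx₀, one_sub_div hx₀]
  generalize q ^ (2 * m) = x, q ^ (2 * n) = y at *
  field

theorem qCoth_mul_add (hq : v q < 1) (hq₀ : q ≠ 0) {m n : ℕ} (hm : m ≠ 0) (hn : n ≠ 0) :
    qCoth q m * (qCoth q (m + n) + qCoth q (m - n)) - 2 =
      qCoth q n * (qCoth q (m - n) - qCoth q (m + n)) + if n = m then qCoth q m ^ 2 - 1 else 0 := by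
  have hadd := qCoth_mul_qCoth hq hq₀ (m := m) (n := m + n) (by lia) (by lia) (by lia)
  rw [add_sub_cancel_left] at hadd
  obtain rfl | hne := eq_or_ne n m
  · rw [sub_self, qCoth_zero, if_pos rfl]
    linear_combination hadd
  have hsub := qCoth_mul_qCoth hq hq₀ (m := m) (n := m - n) (by lia) (by lia) (by lia)
  rw [sub_sub_cancel_left, qCoth_neg hq₀] at hsub
  rw [if_neg hne]
  linear_combination hadd + hsub

theorem qCoth_natCast (q : K) (n : ℕ) : qCoth q n = (1 + q ^ (2 * n)) / (1 - q ^ (2 * n)) := by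
  simp only [qCoth, ← zpow_natCast, Nat.cast_mul, Nat.cast_ofNat]

theorem valuation_qCoth_le_one (hq : v q < 1) (hq₀ : q ≠ 0) (n : ℤ) : v (qCoth q n) ≤ 1 := by
  have hnat (k : ℕ) : v (qCoth q k) ≤ 1 := by
    obtain rfl | hk := eq_or_ne k 0
    · simp
    · rw [qCoth_natCast, map_div₀, valuation_one_add_pow hq (by lia),
        valuation_one_sub_pow hq (by lia), div_one]
  obtain ⟨k, rfl | rfl⟩ := n.eq_nat_or_neg
  · exact hnat k
  · simpa [qCoth_neg hq₀] using hnat k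

theorem qCoth_sub_one_mem_powIdeal (hq : v q < 1) (n : ℕ) :
    qCoth q n - 1 ∈ powIdeal v q (2 * n) := by
  obtain rfl | hn := eq_or_ne n 0
  · simp [mem_powIdeal]
  have hunit : v (1 - q ^ (2 * n)) = 1 := valuation_one_sub_pow hq (by lia)
  have heq : qCoth q n - 1 = 2 * q ^ (2 * n) / (1 - q ^ (2 * n)) := by
    rw [qCoth_natCast, div_sub_one (v.ne_zero_iff.1 (by simp [hunit]))]
    ring
  rw [heq]
  exact div_mem_powIdeal hunit (mul_pow_mem_powIdeal hq (valuation_ofNat_le_one 2) le_rfl)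

theorem sq_qCoth_sub_one (hq : v q < 1) {n : ℕ} (hn : n ≠ 0) :
    qCoth q n ^ 2 - 1 = 4 * (q ^ (2 * n) / (1 - q ^ (2 * n)) ^ 2) := by
  have : 1 - q ^ (2 * n) ≠ 0 := by simpa using one_sub_mul_pow_ne_zero hq v.map_one.le (by lia)
  rw [qCoth_natCast]
  field

theorem sum_qCoth_sub_qCoth_smodEq (hq : v q < 1) (hq₀ : q ≠ 0) {M d : ℕ} (hd : d ≤ M) :
    ∑ t ∈ range M, (qCoth q ((t + 1 : ℕ) - d) - qCoth q ((t + 1 : ℕ) + d)) ≡ qCoth q d - 2 * d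
      [SMOD powIdeal v q (2 * (M - d + 1))] := by
  induction d with
  | zero => simp
  | succ d ih =>
    have hrec : ∑ t ∈ range M, (qCoth q ((t + 1 : ℕ) - (d + 1 : ℕ)) -
        qCoth q ((t + 1 : ℕ) + (d + 1 : ℕ))) =
        ∑ t ∈ range M, (qCoth q ((t + 1 : ℕ) - d) - qCoth q ((t + 1 : ℕ) + d)) +
          (qCoth q (d + 1 : ℕ) + qCoth q (-d)) -
          (qCoth q (M - d : ℕ) + qCoth q (M + d + 1 : ℕ)) := by
      have hleft := sum_range_sub (fun t : ℕ => qCoth q (t - d)) M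
      have hright := sum_range_sub (fun t : ℕ => qCoth q (t + d + 1)) M
      have hcomm (t : ℕ) : (t : ℤ) + 1 + d = t + d + 1 := add_right_comm _ _ _
      simp only [sum_sub_distrib, Nat.cast_add, Nat.cast_one, Nat.cast_zero, zero_sub, zero_add,
        add_sub_add_right_eq_sub, Nat.cast_sub (Nat.le_of_succ_le hd), ← add_assoc, hcomm]
        at hleft hright ⊢
      linear_combination -hleft - hright
    have hfst := qCoth_sub_one_mem_powIdeal hq (M - d)
    have hsnd : qCoth q (M + d + 1 : ℕ) - 1 ∈ powIdeal v q (2 * (M - d)) :=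
      powIdeal_antitone hq (by lia) (qCoth_sub_one_mem_powIdeal hq (M + d + 1))
    have hih := powIdeal_antitone hq (show 2 * (M - d) ≤ 2 * (M - d + 1) by lia)
      (SModEq.sub_mem.1 (ih (Nat.le_of_succ_le hd)))
    rw [hrec, SModEq.sub_mem, show M - (d + 1) + 1 = M - d by lia, qCoth_neg hq₀]
    convert sub_mem hih (add_mem hfst hsnd) using 1
    push_cast
    ring

end Coth

section CothTheta

variable {K Γ₀ : Type*} [Field K] [LinearOrderedCommGroupWithZero Γ₀] {v : Valuation K Γ₀} {q : K}

theorem sum_Icc_neg_natCast {A : Type*} [AddCommGroup A] (f : ℤ → A) (M : ℕ) :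
    ∑ d ∈ Icc (-M : ℤ) M, f d = f 0 + ∑ k ∈ range M, (f (k + 1 : ℕ) + f (-(k + 1 : ℕ))) := by
  induction M with
  | zero => simp
  | succ M ih =>
    rw [Nat.cast_succ, sum_Icc_succ_eq_add_endpoints, ih, sum_range_succ, Nat.cast_succ]
    abel

theorem sum_Icc_neg_natCast_add_one_sub {A : Type*} [AddCommGroup A] (f : ℤ → A) (M : ℕ) :
    ∑ d ∈ Icc (-M : ℤ) M, (f (d + 1) - f d) = f (M + 1) - f (-M) := by
  induction M with
  | zero => simp
  | succ M ih =>
    rw [Nat.cast_succ, sum_Icc_succ_eq_add_endpoints, ih, neg_add_rev, neg_add_cancel_comm]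
    abel

theorem thetaSum_eq_sum_Icc (q : K) (M : ℕ) : thetaSum q M = ∑ d ∈ Icc (-M : ℤ) M, q ^ d ^ 2 := by
  rw [sum_Icc_neg_natCast, thetaSum, mul_sum]
  simp only [neg_sq, ← two_mul]
  norm_cast
  simp

/-- The twist `∑_{|d| ≤ M} q ^ (d²) qCoth q (t + d)` of the theta series, to which `2t q ^ (t²)` is
added to make up for the pole at `d = -t`. -/
noncomputable def cothTheta (q : K) (M t : ℕ) : K :=
  ∑ d ∈ Icc (-M : ℤ) M, q ^ d ^ 2 * qCoth q (t + d) + 2 * t * q ^ t ^ 2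

/-- The limit as `M → ∞` of the ratio `cothTheta q M t / thetaSum q M`, a polynomial in `q`. -/
def cothQuot (q : K) : ℕ → K
  | 0 => 0
  | t + 1 => 1 + q ^ (2 * t + 1) * (1 + cothQuot q t)

/-- The partial sum `∑_{1 ≤ t ≤ M} (qCoth q t * cothQuot q t - 1)` of the series `E` in the identity
`1 - 2 E (-q) = rankSum (-1) (-1) q`. -/
def defectSum (q : K) (M : ℕ) : K :=
  ∑ t ∈ range M, (qCoth q (t + 1 : ℕ) * cothQuot q (t + 1) - 1)

theorem cothTheta_zero (hq₀ : q ≠ 0) (M : ℕ) : cothTheta q M 0 = 0 := by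
  simp only [cothTheta, sum_Icc_neg_natCast, Nat.cast_zero, zero_add, neg_sq, qCoth_neg hq₀]
  simp

theorem cothTheta_succ (hq : v q < 1) (hq₀ : q ≠ 0) {M t : ℕ} (ht : t ≤ M) :
    cothTheta q M (t + 1) = thetaSum q M + q ^ (2 * t + 1) * (thetaSum q M + cothTheta q M t) +
      (q ^ M ^ 2 * (qCoth q (t + M + 1 : ℕ) - 1) - q ^ (M + 1) ^ 2 * (qCoth q (t - M) - 1)) := by
  set f : ℤ → K := fun d => q ^ (d - 1) ^ 2 * (qCoth q (t + d) - 1) with hf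
  have hterm (d : ℤ) : q ^ d ^ 2 * qCoth q ((t + 1 : ℕ) + d) =
      q ^ d ^ 2 + q ^ (2 * t + 1) * (q ^ d ^ 2 + q ^ d ^ 2 * qCoth q (t + d)) -
        (if -(t : ℤ) = d then 2 * q ^ (t + 1) ^ 2 else 0) + (f (d + 1) - f d) := by
    have hexp : q ^ (d - 1) ^ 2 * q ^ (2 * (t + d)) = q ^ (2 * t + 1) * q ^ d ^ 2 := by
      rw [← zpow_natCast, ← zpow_add₀ hq₀, ← zpow_add₀ hq₀]
      congr 1
      push_cast
      ring
    have hpole : (q ^ (d - 1) ^ 2 * if t + d = 0 then 2 else 0) =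
        if -(t : ℤ) = d then 2 * q ^ (t + 1) ^ 2 else 0 := by
      rw [mul_ite, mul_zero, mul_comm]
      refine if_ctx_congr neg_eq_iff_add_eq_zero.symm (fun h => ?_) fun _ => rfl
      rw [← h, ← zpow_natCast]
      congr 2
      push_cast
      ring
    have hstep := qCoth_sub_one hq hq₀ (t + d)
    simp only [hf, add_sub_cancel_right, Nat.cast_succ, add_right_comm (t : ℤ) 1 d, ← add_assoc]
    linear_combination q ^ (d - 1) ^ 2 * hstep + (1 + qCoth q (t + d)) * hexp - hpole
  rw [cothTheta, sum_congr rfl fun d _ => hterm d, sum_add_distrib, sum_sub_distrib,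
    sum_add_distrib, ← mul_sum, sum_add_distrib, ← thetaSum_eq_sum_Icc, sum_ite_eq,
    if_pos (by simp; lia), sum_Icc_neg_natCast_add_one_sub, cothTheta]
  have hend : f (M + 1) = q ^ M ^ 2 * (qCoth q (t + M + 1 : ℕ) - 1) := by
    simp only [hf, add_sub_cancel_right, ← add_assoc]
    norm_cast
  have hstart : f (-M) = q ^ (M + 1) ^ 2 * (qCoth q (t - M) - 1) := by
    simp only [hf, ← neg_add', neg_sq, ← sub_eq_add_neg]
    norm_cast
  rw [hend, hstart]
  push_cast
  ring

theorem cothTheta_smodEq (hq : v q < 1) (hq₀ : q ≠ 0) {M t : ℕ} (ht : t ≤ M) :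
    cothTheta q M t ≡ thetaSum q M * cothQuot q t [SMOD powIdeal v q (M + 1)] := by
  induction t with
  | zero => simp [cothTheta_zero hq₀, cothQuot]
  | succ t ih =>
    have hpow (n : ℕ) : v (q ^ n) ≤ 1 := by simpa using pow_le_one' hq.le n
    have hend : q ^ M ^ 2 * (qCoth q (t + M + 1 : ℕ) - 1) ∈ powIdeal v q (M + 1) :=
      mul_mem_powIdeal_left (hpow _)
        (powIdeal_antitone hq (by lia) (qCoth_sub_one_mem_powIdeal hq _))
    have hstart : q ^ (M + 1) ^ 2 * (qCoth q (t - M) - 1) ∈ powIdeal v q (M + 1) :=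
      mul_mem_powIdeal_right (pow_mem_powIdeal hq (by nlinarith))
        (v.map_sub_le (valuation_qCoth_le_one hq hq₀ _) v.map_one.le)
    rw [cothTheta_succ hq hq₀ (Nat.le_of_succ_le ht), cothQuot]
    refine (smodEq_add_of_mem (sub_mem hend hstart)).trans ?_
    convert SModEq.rfl.add (smodEq_mul_left (hpow (2 * t + 1))
      (SModEq.rfl.add (ih (Nat.le_of_succ_le ht)))) using 1
    ring

theorem qCoth_mul_cothTheta_sub_thetaSum (hq : v q < 1) (hq₀ : q ≠ 0) {M t : ℕ} (ht : t < M) :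
    qCoth q (t + 1 : ℕ) * cothTheta q M (t + 1) - thetaSum q M =
      (qCoth q (t + 1 : ℕ) ^ 2 - 1) + ∑ k ∈ range M, q ^ (k + 1) ^ 2 * (qCoth q (k + 1 : ℕ) *
        (qCoth q ((t + 1 : ℕ) - (k + 1 : ℕ)) - qCoth q ((t + 1 : ℕ) + (k + 1 : ℕ)))) +
      q ^ (t + 1) ^ 2 *
        (qCoth q (t + 1 : ℕ) ^ 2 - 1 + 2 * (t + 1 : ℕ) * qCoth q (t + 1 : ℕ)) := by
  set c := qCoth q (t + 1 : ℕ) with hc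
  have hexpand : cothTheta q M (t + 1) = c + ∑ k ∈ range M, q ^ (k + 1) ^ 2 *
      (qCoth q ((t + 1 : ℕ) + (k + 1 : ℕ)) + qCoth q ((t + 1 : ℕ) - (k + 1 : ℕ))) +
      2 * (t + 1 : ℕ) * q ^ (t + 1) ^ 2 := by
    have hsq (k : ℕ) : q ^ ((k + 1 : ℕ) : ℤ) ^ 2 = q ^ (k + 1) ^ 2 := by norm_cast
    simp only [cothTheta, sum_Icc_neg_natCast, neg_sq, hsq, ← sub_eq_add_neg, mul_add, hc]
    simp
  have hpole : ∑ k ∈ range M, q ^ (k + 1) ^ 2 * (if k + 1 = t + 1 then c ^ 2 - 1 else 0) =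
      q ^ (t + 1) ^ 2 * (c ^ 2 - 1) := by
    simp [ht]
  calc
    _ = (c ^ 2 - 1) + ∑ k ∈ range M, q ^ (k + 1) ^ 2 *
          (c * (qCoth q ((t + 1 : ℕ) + (k + 1 : ℕ)) + qCoth q ((t + 1 : ℕ) - (k + 1 : ℕ))) - 2) +
        2 * (t + 1 : ℕ) * q ^ (t + 1) ^ 2 * c := by
      simp only [hexpand, thetaSum, mul_sub, sum_sub_distrib, ← sum_mul, mul_left_comm _ c,
        ← mul_sum]
      ring
    _ = _ := by
      simp only [hc, qCoth_mul_add hq hq₀ t.add_one_ne_zero (Nat.add_one_ne_zero _)]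
      simp only [← hc, mul_add, sum_add_distrib, hpole]
      ring

theorem thetaSum_mul_defectSum_smodEq (hq : v q < 1) (hq₀ : q ≠ 0) (M : ℕ) :
    thetaSum q M * defectSum q M ≡ ∑ t ∈ range M, (qCoth q (t + 1 : ℕ) ^ 2 - 1) +
      ∑ t ∈ range M, q ^ (t + 1) ^ 2 * (2 * qCoth q (t + 1 : ℕ) ^ 2 - 1)
        [SMOD powIdeal v q (M + 1)] := by
  have hquot : thetaSum q M * defectSum q M ≡
      ∑ t ∈ range M, (qCoth q (t + 1 : ℕ) * cothTheta q M (t + 1) - thetaSum q M)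
        [SMOD powIdeal v q (M + 1)] := by
    rw [defectSum, mul_sum]
    refine SModEq.sum fun t ht => ?_
    rw [mul_sub, mul_one, mul_left_comm]
    exact (smodEq_mul_left (valuation_qCoth_le_one hq hq₀ _)
      (cothTheta_smodEq hq hq₀ (Nat.succ_le_of_lt (mem_range.1 ht))).symm).sub SModEq.rfl
  have hinner : ∑ t ∈ range M, ∑ k ∈ range M, q ^ (k + 1) ^ 2 * (qCoth q (k + 1 : ℕ) *
      (qCoth q ((t + 1 : ℕ) - (k + 1 : ℕ)) - qCoth q ((t + 1 : ℕ) + (k + 1 : ℕ)))) ≡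
      ∑ k ∈ range M, q ^ (k + 1) ^ 2 *
        (qCoth q (k + 1 : ℕ) * (qCoth q (k + 1 : ℕ) - 2 * (k + 1 : ℕ)))
        [SMOD powIdeal v q (M + 1)] := by
    rw [sum_comm]
    refine SModEq.sum fun k hk => ?_
    have htele := SModEq.sub_mem.1 (smodEq_mul_left (valuation_qCoth_le_one hq hq₀ (k + 1 : ℕ))
      (sum_qCoth_sub_qCoth_smodEq hq hq₀ (Nat.succ_le_of_lt (mem_range.1 hk))))
    rw [← mul_sum, ← mul_sum, SModEq.sub_mem, ← mul_sub]
    refine powIdeal_antitone hq ?_ (mul_mem_powIdeal (pow_mem_powIdeal hq le_rfl) htele)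
    obtain ⟨m, rfl⟩ := Nat.exists_eq_add_of_lt (mem_range.1 hk)
    rw [add_assoc k, Nat.add_comm m 1, ← add_assoc, Nat.add_sub_cancel_left]
    nlinarith
  rw [sum_congr rfl fun t ht => qCoth_mul_cothTheta_sub_thetaSum hq hq₀ (mem_range.1 ht),
    sum_add_distrib, sum_add_distrib] at hquot
  convert hquot.trans ((SModEq.rfl.add hinner).add SModEq.rfl) using 1
  rw [add_assoc, add_right_inj, ← sum_add_distrib]
  exact sum_congr rfl fun t _ => by ring

theorem thetaSum_mul_one_sub_defectSum_smodEq (hq : v q < 1) (hq₀ : q ≠ 0) (M : ℕ) :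
    thetaSum q M * (1 - 2 * defectSum q M) ≡ 1 - 8 * ∑ t ∈ range M,
      (q ^ (2 * (t + 1)) + 2 * q ^ ((t + 1) ^ 2 + 2 * (t + 1))) / (1 - q ^ (2 * (t + 1))) ^ 2
        [SMOD powIdeal v q (M + 1)] := by
  have hdefect := smodEq_mul_left (valuation_ofNat_le_one (v := v) 2)
    (thetaSum_mul_defectSum_smodEq hq hq₀ M)
  convert (SModEq.refl (thetaSum q M)).sub hdefect using 1
  · ring
  have hsum : ∑ t ∈ range M, ((qCoth q (t + 1 : ℕ) ^ 2 - 1) +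
      q ^ (t + 1) ^ 2 * (2 * qCoth q (t + 1 : ℕ) ^ 2 - 1) - q ^ (t + 1) ^ 2) = 4 * ∑ t ∈ range M,
      (q ^ (2 * (t + 1)) + 2 * q ^ ((t + 1) ^ 2 + 2 * (t + 1))) / (1 - q ^ (2 * (t + 1))) ^ 2 := by
    rw [mul_sum]
    refine sum_congr rfl fun t _ => ?_
    have hsq := sq_qCoth_sub_one (q := q) hq t.add_one_ne_zero
    linear_combination (1 + 2 * q ^ (t + 1) ^ 2) * hsq
  rw [sum_sub_distrib, sum_add_distrib] at hsum
  rw [thetaSum]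
  linear_combination 2 * hsum

end CothTheta

section NegOne

variable {K Γ₀ : Type*} [Field K] [LinearOrderedCommGroupWithZero Γ₀] {v : Valuation K Γ₀} {q : K}

theorem powIdeal_eq_of_valuation_eq {x y : K} (h : v x = v y) (N : ℕ) :
    powIdeal v x N = powIdeal v y N := by
  ext
  simp only [mem_powIdeal, h]

theorem powIdeal_pow (n N : ℕ) : powIdeal v (q ^ n) N = powIdeal v q (n * N) := by
  ext
  simp only [mem_powIdeal, map_pow, pow_mul]

theorem sum_neg_one_pow_mul_smodEq (hq : v q < 1) (M : ℕ) :
    ∑ r ∈ range M, (-1) ^ (r + 1) * q ^ ((r + 1) ^ 2 + (r + 1)) / (1 + (-q) ^ (r + 1)) ^ 2 ≡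
      -∑ r ∈ range M,
        (q ^ (2 * (r + 1)) + 2 * q ^ ((r + 1) ^ 2 + 2 * (r + 1))) / (1 - q ^ (2 * (r + 1))) ^ 2
      [SMOD powIdeal v q (M + 1)] := by
  have hsq : v (q ^ 2) < 1 := by simpa using pow_lt_one₀ zero_le hq two_ne_zero
  have hterm (r : ℕ) :
      (-1) ^ (r + 1) * q ^ ((r + 1) ^ 2 + (r + 1)) / (1 + (-q) ^ (r + 1)) ^ 2 =
        (-1) ^ (r + 1) * (q ^ 2) ^ (r + 2).choose 2 * (1 + (q ^ 2) ^ (r + 1)) /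
          (1 - (q ^ 2) ^ (r + 1)) ^ 2 -
        2 * q ^ ((r + 1) ^ 2 + 2 * (r + 1)) / (1 - q ^ (2 * (r + 1))) ^ 2 := by
    have hchoose : 2 * (r + 2).choose 2 = (r + 1) ^ 2 + (r + 1) := by
      have := choose_two_add_choose_two_succ (r + 1)
      have := Nat.choose_succ_succ (r + 1) 1
      simp only [Nat.choose_one_right] at this
      lia
    have hsign : ((-1) ^ (r + 1) : K) ^ 2 = 1 := by rw [← pow_mul, mul_comm, pow_mul]; simp
    have hne := one_sub_pow_succ_ne_zero hsq r
    have hlast : q ^ ((r + 1) ^ 2 + 2 * (r + 1)) = q ^ ((r + 1) ^ 2 + (r + 1)) * q ^ (r + 1) := by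
      ring
    rw [← pow_mul, hchoose, hlast, neg_pow q, pow_right_comm, mul_comm 2 (r + 1),
      pow_mul q (r + 1)]
    rw [pow_right_comm] at hne
    generalize (-1 : K) ^ (r + 1) = s, q ^ (r + 1) = b, q ^ ((r + 1) ^ 2 + (r + 1)) = p at *
    have hfactor : 1 - b ^ 2 = (1 + s * b) * (1 - s * b) := by linear_combination b ^ 2 * hsign
    rw [hfactor, mul_ne_zero_iff] at hne
    obtain ⟨hadd, hsub⟩ := hne
    rw [hfactor]
    field_simp
    linear_combination (p * b ^ 2 * s - 2 * p * b) * hsign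
  have hdivisor := sum_pow_div_sq_smodEq hsq M
  rw [powIdeal_pow] at hdivisor
  have hle : M + 1 ≤ 2 * (M + 1) := by lia
  rw [SModEq.sub_mem]
  convert powIdeal_antitone hq hle (SModEq.sub_mem.1 hdivisor) using 1
  simp only [hterm, sum_sub_distrib, add_div, sum_add_distrib, ← pow_mul q 2]
  ring

theorem rankSum_neg_one_mul_thetaSum_smodEq (hq : v q < 1) (M : ℕ) :
    rankSum (-1) (-1) (-q) M * thetaSum q M ≡ 1 - 8 * ∑ r ∈ range M,
      (q ^ (2 * (r + 1)) + 2 * q ^ ((r + 1) ^ 2 + 2 * (r + 1))) / (1 - q ^ (2 * (r + 1))) ^ 2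
      [SMOD powIdeal v q (M + 1)] := by
  have hneg : v (-q) = v q := v.map_neg q
  have hone : v (-1) ≤ 1 := by rw [v.map_neg, v.map_one]
  have hden (r : ℕ) :
      appellDenom ((1 - -1) * (1 - -1)) (-q) (r + 1) = (1 + (-q) ^ (r + 1)) ^ 2 := by
    rw [appellDenom]
    ring
  have heven (r : ℕ) : (-q) ^ ((r + 1) ^ 2 + (r + 1)) = q ^ ((r + 1) ^ 2 + (r + 1)) :=
    Even.neg_pow (by rw [sq, ← Nat.mul_succ]; exact Nat.even_mul_succ_self (r + 1)) q
  have hprod := rankSum_mul_thetaSum_neg_smodEq (hneg.trans_lt hq) hone hone (by norm_num) M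
  simp only [hden, heven, neg_neg, powIdeal_eq_of_valuation_eq hneg] at hprod
  refine hprod.trans ?_
  convert SModEq.rfl.add (smodEq_mul_left (valuation_ofNat_le_one 8)
    (sum_neg_one_pow_mul_smodEq hq M)) using 1
  · norm_num
    rfl
  · rw [mul_neg, sub_eq_add_neg]

theorem rankSum_neg_one_smodEq (hq : v q < 1) (hq₀ : q ≠ 0) (M : ℕ) :
    rankSum (-1) (-1) (-q) M ≡ 1 - 2 * defectSum q M [SMOD powIdeal v q (M + 1)] := by
  have hθ := valuation_thetaSum hq M
  have h := (rankSum_neg_one_mul_thetaSum_smodEq hq M).trans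
    (thetaSum_mul_one_sub_defectSum_smodEq hq hq₀ M).symm
  rw [mul_comm, SModEq.sub_mem, ← mul_sub] at h
  rw [SModEq.sub_mem]
  simpa [v.ne_zero_iff.1 (hθ.trans_ne one_ne_zero)] using div_mem_powIdeal hθ h

end NegOne

section Positivity

open PowerSeries

variable {K : Type*} [Field K] {q : K} {φ : ℕ⟦X⟧ →+* K}

theorem map_mk_ite_dvd_mul_one_sub (hφ : φ X = q) {k : ℕ} (hk : k ≠ 0) :
    φ (PowerSeries.mk fun n => if k ∣ n then 1 else 0) * (1 - q ^ k) = 1 := by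
  set s : ℕ⟦X⟧ := PowerSeries.mk fun n => if k ∣ n then 1 else 0 with hs
  have hgeom : s = 1 + X ^ k * s := by
    ext n
    rw [map_add, coeff_X_pow_mul', hs, coeff_mk, coeff_one, coeff_mk]
    obtain hn | hn := lt_or_ge n k
    · have hdvd : k ∣ n ↔ n = 0 := ⟨(Nat.eq_zero_of_dvd_of_lt · hn), fun h => h ▸ dvd_zero k⟩
      simp [hdvd, hn.not_ge]
    · have hn₀ : n ≠ 0 := by lia
      simp [hn, hn₀, Nat.dvd_sub_iff_left hn dvd_rfl]
  have hmap := congrArg φ hgeom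
  rw [map_add, map_mul, map_pow, hφ, map_one] at hmap
  linear_combination hmap

theorem cothQuot_mem_rangeS (hφ : φ X = q) (t : ℕ) : cothQuot q t ∈ φ.rangeS := by
  have hq : q ∈ φ.rangeS := ⟨X, hφ⟩
  induction t with
  | zero => exact zero_mem _
  | succ t ih => exact add_mem (one_mem _) (mul_mem (pow_mem hq _) (add_mem (one_mem _) ih))

theorem qCoth_mul_cothQuot_sub_one_mem_rangeS (hφ : φ X = q) (t : ℕ) :
    qCoth q (t + 1 : ℕ) * cothQuot q (t + 1) - 1 ∈ φ.rangeS := by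
  have hq : q ∈ φ.rangeS := ⟨X, hφ⟩
  have hinv := map_mk_ite_dvd_mul_one_sub hφ (k := 2 * (t + 1)) (by lia)
  have hne := right_ne_zero_of_mul_eq_one hinv
  have heq : qCoth q (t + 1 : ℕ) * cothQuot q (t + 1) - 1 =
      2 * q ^ (2 * (t + 1)) * (1 - q ^ (2 * (t + 1)))⁻¹ * cothQuot q (t + 1) +
        q ^ (2 * t + 1) * (1 + cothQuot q t) := by
    rw [qCoth_natCast, cothQuot]
    generalize q ^ (2 * (t + 1)) = y at *
    field
  rw [heq]
  exact add_mem (mul_mem (mul_mem (mul_mem (ofNat_mem _ 2) (pow_mem hq _))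
    ⟨_, eq_inv_of_mul_eq_one_left hinv⟩) (cothQuot_mem_rangeS hφ _))
    (mul_mem (pow_mem hq _) (add_mem (one_mem _) (cothQuot_mem_rangeS hφ t)))

theorem exists_map_eq_defectSum (hφ : φ X = q) (M : ℕ) :
    ∃ g, φ g = defectSum q (M + 1) ∧ ∀ n, 2 ≤ n → 2 ≤ coeff n g := by
  obtain ⟨f, hf⟩ : ∑ t ∈ range M, (qCoth q (t + 2 : ℕ) * cothQuot q (t + 2) - 1) ∈ φ.rangeS :=
    sum_mem fun t _ => qCoth_mul_cothQuot_sub_one_mem_rangeS hφ (t + 1)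
  have hgeom := map_mk_ite_dvd_mul_one_sub hφ one_ne_zero
  simp only [one_dvd, if_true, pow_one] at hgeom
  set s : ℕ⟦X⟧ := PowerSeries.mk fun _ => 1 with hs
  refine ⟨f + (X + X ^ 2 * (2 * s)), ?_, fun n hn => ?_⟩
  · have hfst : φ (X + X ^ 2 * (2 * s)) = qCoth q (0 + 1 : ℕ) * cothQuot q (0 + 1) - 1 := by
      have hsq := right_ne_zero_of_mul_eq_one (map_mk_ite_dvd_mul_one_sub hφ two_ne_zero)
      have hone := right_ne_zero_of_mul_eq_one hgeom
      simp only [map_add, map_mul, map_pow, map_ofNat, hφ, eq_inv_of_mul_eq_one_left hgeom,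
        qCoth_natCast, cothQuot]
      norm_num
      field
    rw [map_add, hf, hfst, defectSum, sum_range_succ']
  · obtain ⟨k, rfl⟩ := Nat.exists_eq_add_of_le' hn
    have hcoeff : coeff (k + 2) (X ^ 2 * (2 * s)) = 2 := by
      rw [coeff_X_pow_mul, two_mul, map_add, hs, coeff_mk]
    rw [map_add, map_add, hcoeff, ← add_assoc]
    exact le_add_self

end Positivity

section RankGenFun

open PowerSeries
open scoped PowerSeries.WithPiTopology

variable {R : Type*} [CommRing R]

theorem one_add_tsum_mul_one_sub [TopologicalSpace R] [IsTopologicalRing R] [T2Space R]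
    (w : R) (i : ℕ) :
    (1 + ∑' j : ℕ, (2 * w ^ (j + 1)) • (X : R⟦X⟧) ^ ((i + 1) * (j + 1))) *
      (1 - C w * X ^ (i + 1)) = 1 + C w * X ^ (i + 1) := by
  have hsummable : Summable fun j : ℕ => (2 * w ^ (j + 1)) • (X : R⟦X⟧) ^ ((i + 1) * (j + 1)) :=
    Nat.Partition.summable_genFun_term (fun _ c => 2 * w ^ c) i
  have hshift (j : ℕ) : (2 * w ^ (j + 1 + 1)) • (X : R⟦X⟧) ^ ((i + 1) * (j + 1 + 1)) =
      C w * X ^ (i + 1) * ((2 * w ^ (j + 1)) • (X : R⟦X⟧) ^ ((i + 1) * (j + 1))) := by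
    simp only [smul_eq_C_mul, map_mul, map_pow]
    ring
  have hzero : (2 * w ^ (0 + 1)) • (X : R⟦X⟧) ^ ((i + 1) * (0 + 1)) =
      2 * (C w * X ^ (i + 1)) := by
    simp only [smul_eq_C_mul, map_mul, map_pow, map_ofNat]
    ring
  have htsum := hsummable.tsum_eq_zero_add
  simp_rw [hshift] at htsum
  rw [hsummable.tsum_mul_left, hzero] at htsum
  linear_combination htsum

/-- The generating function of the overpartitions all of whose parts are at most `m`, counted with
weight `w` to the number of parts: each distinct part size, overlined or not, contributes `2`. -/
noncomputable def boundedGenFun (w : R) (m : ℕ) : R⟦X⟧ :=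
  Nat.Partition.genFun fun i c => if i ≤ m then 2 * w ^ c else 0

theorem boundedGenFun_mul_qPoch (w : R) (m : ℕ) :
    boundedGenFun w m * qPoch (C w * X) X m = qPoch (-C w * X) X m := by
  let _ : TopologicalSpace R := ⊥
  have _ : DiscreteTopology R := ⟨rfl⟩
  have hprod : boundedGenFun w m = ∏ i ∈ range m,
      (1 + ∑' j : ℕ, (2 * w ^ (j + 1)) • (X : R⟦X⟧) ^ ((i + 1) * (j + 1))) := by
    refine (Nat.Partition.hasProd_genFun fun i c => if i ≤ m then 2 * w ^ c else 0).unique ?_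
    have hfactor : ∀ i ∈ range m,
        1 + ∑' j : ℕ, (2 * w ^ (j + 1)) • (X : R⟦X⟧) ^ ((i + 1) * (j + 1)) =
          1 + ∑' j : ℕ, (if i + 1 ≤ m then 2 * w ^ (j + 1) else 0) • X ^ ((i + 1) * (j + 1)) :=
      fun i hi => by simp only [if_pos (Nat.succ_le_of_lt (mem_range.1 hi))]
    rw [prod_congr rfl hfactor]
    refine hasProd_prod_of_ne_finset_one fun i hi => ?_
    simp only [if_neg (mt Nat.lt_of_succ_le (mt mem_range.2 hi)), zero_smul, tsum_zero, add_zero]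
  rw [hprod, qPoch, qPoch, ← prod_mul_distrib]
  refine prod_congr rfl fun i _ => ?_
  linear_combination one_add_tsum_mul_one_sub w i

theorem coeff_boundedGenFun (w : R) (m n : ℕ) :
    coeff n (boundedGenFun w m) = ∑ p : n.Partition,
      if p.parts.sup ≤ m then 2 ^ #p.parts.toFinset * w ^ p.parts.card else 0 := by
  rw [boundedGenFun, Nat.Partition.coeff_genFun]
  refine sum_congr rfl fun p _ => ?_
  rw [Finsupp.prod, Multiset.toFinsupp_support]
  simp only [Multiset.toFinsupp_apply, Multiset.sup_le]
  split_ifs with hp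
  · rw [prod_congr rfl fun i hi => if_pos (hp i (Multiset.mem_toFinset.1 hi)), prod_mul_distrib,
      prod_const, prod_pow_eq_pow_sum, Multiset.toFinset_sum_count_eq]
  · push Not at hp
    obtain ⟨i, hi, him⟩ := hp
    exact prod_eq_zero (Multiset.mem_toFinset.2 hi) (if_neg him.not_ge)

/-- The generating function, correct up to order `M`, of the overpartitions counted with weight
`z` to the largest part times `w` to the number of parts. -/
noncomputable def rankGenFun (z w : R) (M : ℕ) : R⟦X⟧ :=
  boundedGenFun w 0 +
    ∑ m ∈ range M, C (z ^ (m + 1)) * (boundedGenFun w (m + 1) - boundedGenFun w m)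

theorem ite_add_sum_pow_mul_ite_sub (z : R) {s M : ℕ} (hs : s ≤ M) :
    (if s ≤ 0 then 1 else 0) + ∑ m ∈ range M, z ^ (m + 1) *
      ((if s ≤ m + 1 then 1 else 0) - if s ≤ m then 1 else 0) = z ^ s := by
  have hjump (m : ℕ) : (if s ≤ m + 1 then (1 : R) else 0) - (if s ≤ m then 1 else 0) =
      if s = m + 1 then 1 else 0 := by
    split_ifs <;> first | lia | simp
  simp only [hjump, mul_ite, mul_one, mul_zero]
  cases s with
  | zero => simp
  | succ s => simp [sum_ite_eq, Nat.lt_of_succ_le hs]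

theorem coeff_rankGenFun (z w : R) {M n : ℕ} (hn : n ≤ M) :
    coeff n (rankGenFun z w M) = ∑ p : n.Partition,
      2 ^ #p.parts.toFinset * (z ^ p.parts.sup * w ^ p.parts.card) := by
  simp only [rankGenFun, map_add, map_sum, coeff_C_mul, map_sub, coeff_boundedGenFun,
    ← sum_sub_distrib, mul_sum]
  rw [sum_comm, ← sum_add_distrib]
  refine sum_congr rfl fun p _ => ?_
  have hsup : p.parts.sup ≤ M :=
    Multiset.sup_le.2 fun i hi => (p.le_of_mem_parts hi).trans hn
  rw [← ite_add_sum_pow_mul_ite_sub z hsup, add_mul, mul_add, sum_mul, mul_sum]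
  congr 1
  · rw [ite_mul, mul_ite, one_mul, zero_mul, mul_zero]
  · refine sum_congr rfl fun m _ => ?_
    split_ifs <;> ring

variable {K Γ₀ : Type*} [Field K] [LinearOrderedCommGroupWithZero Γ₀] {v : Valuation K Γ₀}

theorem map_boundedGenFun (φ : R⟦X⟧ →+* K) {w : R} (hX : v (φ X) < 1) (hw : v (φ (C w)) ≤ 1)
    (m : ℕ) :
    φ (boundedGenFun w m) =
      qPoch (-φ (C w) * φ X) (φ X) m / qPoch (φ (C w) * φ X) (φ X) m := by
  have hmap := congrArg φ (boundedGenFun_mul_qPoch w m)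
  simp only [map_mul, map_qPoch, map_neg] at hmap
  exact eq_div_of_mul_eq
    (qPoch_mul_ne_zero (fun n => one_sub_mul_pow_ne_zero hX hw n.succ_ne_zero) m) hmap

theorem map_rankGenFun (φ : R⟦X⟧ →+* K) {z w : R} (hX : v (φ X) < 1) (hw : v (φ (C w)) ≤ 1)
    (hzw : z * w = 1) (M : ℕ) :
    φ (rankGenFun z w M) = rankSum (φ (C z)) (φ (C w)) (φ X) M := by
  have hzw' : φ (C z) * φ (C w) = 1 := by simp only [← map_mul, hzw, map_one]
  have hterm (m : ℕ) : φ (C (z ^ (m + 1)) * (boundedGenFun w (m + 1) - boundedGenFun w m)) =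
      2 * (φ (C z) ^ m * φ X ^ (m + 1) * qPoch (-φ (C w) * φ X) (φ X) m /
        qPoch (φ (C w) * φ X) (φ X) (m + 1)) := by
    have hne := qPoch_mul_ne_zero (fun n => one_sub_mul_pow_ne_zero hX hw n.succ_ne_zero) (m + 1)
    rw [map_mul, map_sub, map_boundedGenFun φ hX hw, map_boundedGenFun φ hX hw, map_pow, map_pow]
    rw [qPoch_mul_succ] at hne
    simp only [qPoch_mul_succ]
    obtain ⟨hne₁, hne₂⟩ := mul_ne_zero_iff.1 hne
    generalize qPoch (-φ (C w) * φ X) (φ X) m = A at *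
    generalize qPoch (φ (C w) * φ X) (φ X) m = B at *
    generalize φ (C z) = y at *
    generalize φ (C w) = u at *
    generalize φ X = x at *
    field_simp
    linear_combination 2 * A * x ^ (m + 1) * y ^ m * hzw'
  rw [rankGenFun, rankSum, map_add, map_sum, sum_congr rfl fun m _ => hterm m, ← mul_sum,
    map_boundedGenFun φ hX hw]
  simp

end RankGenFun

section LaurentSeries

open PowerSeries
open HahnSeries (ofPowerSeries ofPowerSeries_injective)
open scoped LaurentSeries

variable {F : Type*} [Field F]

theorem valuation_ofPowerSeries_X_lt_one : Valued.v (ofPowerSeries ℤ F X) < 1 := by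
  have h := LaurentSeries.valuation_X_pow F 1
  rw [pow_one] at h
  rw [h]
  exact WithZero.exp_lt_exp.2 (by norm_num)

theorem valuation_ofPowerSeries_le_one (f : F⟦X⟧) : Valued.v (ofPowerSeries ℤ F f) ≤ 1 :=
  (LaurentSeries.val_le_one_iff_eq_coe F _).2 ⟨f, rfl⟩

theorem coeff_eq_of_smodEq_powIdeal {f g : F⟦X⟧} {n N : ℕ} (hn : n < N)
    (hfg : ofPowerSeries ℤ F f ≡ ofPowerSeries ℤ F g
      [SMOD powIdeal Valued.v (ofPowerSeries ℤ F X) N]) :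
    coeff n f = coeff n g := by
  rw [SModEq.sub_mem, mem_powIdeal, ← map_pow, LaurentSeries.valuation_X_pow] at hfg
  simpa only [LaurentSeries.coeff_coe_powerSeries] using
    LaurentSeries.eq_coeff_of_valuation_sub_lt F hfg (Int.ofNat_lt.2 hn)

theorem coeff_thetaSum_X {R : Type*} [CommRing R] {n M : ℕ} (hn : n ≠ 0) (hnM : n ≤ M) :
    coeff n (thetaSum (X : R⟦X⟧) M) = if IsSquare n then 2 else 0 := by
  have hcoeff : coeff n (thetaSum (X : R⟦X⟧) M) =
      2 * ∑ k ∈ range M, if n = (k + 1) ^ 2 then 1 else 0 := by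
    simp only [thetaSum, map_add, two_mul, map_sum, coeff_X_pow, coeff_one, if_neg hn, zero_add]
  rw [hcoeff]
  split_ifs with hsq
  · obtain ⟨r, rfl⟩ := hsq
    obtain ⟨k, rfl⟩ := Nat.exists_eq_succ_of_ne_zero (left_ne_zero_of_mul hn)
    have hk : k ∈ range M := mem_range.2 ((Nat.le_mul_self k.succ).trans hnM)
    simp [← sq, sum_ite_eq, hk]
  · rw [sum_eq_zero fun k _ => if_neg fun h => hsq ⟨k + 1, h.trans (sq _)⟩, mul_zero]

theorem sum_partition_eq_ite_isSquare {z w : F} (hzw : z * w = 1) (hadd : z + w = 0)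
    {n : ℕ} (hn : n ≠ 0) :
    ∑ p : n.Partition,
      2 ^ #p.parts.toFinset * (z ^ p.parts.sup * w ^ p.parts.card) =
        if IsSquare n then 2 else 0 := by
  have hsmod : ofPowerSeries ℤ F (rankGenFun z w n) ≡ ofPowerSeries ℤ F (thetaSum X n)
      [SMOD powIdeal Valued.v (ofPowerSeries ℤ F X) (n + 1)] := by
    rw [map_rankGenFun _ valuation_ofPowerSeries_X_lt_one (valuation_ofPowerSeries_le_one _) hzw,
      map_thetaSum]
    refine rankSum_smodEq_thetaSum valuation_ofPowerSeries_X_lt_one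
      (valuation_ofPowerSeries_le_one _) (valuation_ofPowerSeries_le_one _) ?_ ?_ n
    · simp only [← map_mul, hzw, map_one]
    · simp only [← map_add, hadd, map_zero]
  rw [← coeff_rankGenFun z w le_rfl, coeff_eq_of_smodEq_powIdeal n.lt_succ_self hsmod,
    coeff_thetaSum_X hn le_rfl]

theorem exists_sum_partition_neg_one_eq {n : ℕ} (hn : 2 ≤ n) :
    ∃ e : ℕ, 2 ≤ e ∧ ∑ p : n.Partition,
      2 ^ #p.parts.toFinset * ((-1) ^ p.parts.sup * (-1) ^ p.parts.card) =
        -2 * (-1) ^ n * (e : F) := by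
  obtain ⟨m, rfl⟩ := Nat.exists_eq_add_of_le' (one_le_two.trans hn)
  obtain ⟨g, hg, hge⟩ := exists_map_eq_defectSum
    (φ := (ofPowerSeries ℤ F).comp (evalNegHom.comp (PowerSeries.map (Nat.castRingHom F))))
    (q := -ofPowerSeries ℤ F X) (by simp) m
  rw [RingHom.comp_apply, RingHom.comp_apply] at hg
  have hX : Valued.v (-ofPowerSeries ℤ F X) < 1 := by
    simpa only [Valuation.map_neg] using valuation_ofPowerSeries_X_lt_one
  have hX₀ : -ofPowerSeries ℤ F X ≠ 0 :=
    neg_ne_zero.2 ((map_ne_zero_iff _ ofPowerSeries_injective).2 X_ne_zero)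
  have hsmod : ofPowerSeries ℤ F (rankGenFun (-1) (-1) (m + 1)) ≡ ofPowerSeries ℤ F
      (1 - 2 * evalNegHom (PowerSeries.map (Nat.castRingHom F) g))
      [SMOD powIdeal Valued.v (ofPowerSeries ℤ F X) (m + 1 + 1)] := by
    have h := rankSum_neg_one_smodEq hX hX₀ (m + 1)
    rw [neg_neg, ← hg, powIdeal_eq_of_valuation_eq (Valuation.map_neg _ _)] at h
    rw [map_rankGenFun _ valuation_ofPowerSeries_X_lt_one (valuation_ofPowerSeries_le_one _)
      (by norm_num)]
    simpa only [map_neg, map_one, map_sub, map_mul, map_ofNat] using h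
  refine ⟨coeff (m + 1) g, hge _ hn, ?_⟩
  rw [← coeff_rankGenFun (-1) (-1) le_rfl, coeff_eq_of_smodEq_powIdeal (m + 1).lt_succ_self hsmod,
    map_sub, two_mul, map_add, evalNegHom, coeff_rescale, coeff_map, coeff_one,
    if_neg m.succ_ne_zero, eq_natCast]
  ring

end LaurentSeries

end QSeries

namespace Overpartition

variable {n : ℕ}

/-- An overpartition as a pair of its underlying partition and the set of its overlined sizes; this
is how sums over overpartitions of functions of the underlying partition are computed. -/
def equivSigma (n : ℕ) :
    Overpartition n ≃ Σ p : n.Partition, {s : Finset ℕ // s ∈ p.parts.toFinset.powerset} where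
  toFun P := ⟨P.1.1, P.1.2, mem_powerset.2 P.2⟩
  invFun x := ⟨(x.1, x.2.1), mem_powerset.1 x.2.2⟩

instance : Fintype (Overpartition n) := Fintype.ofEquiv _ (equivSigma n).symm

theorem sum_zpow_rank {F : Type*} [Field F] {z w : F} (hzw : z * w = 1) (n : ℕ) :
    ∑ P : Overpartition n, z ^ P.rank = ∑ p : n.Partition,
      2 ^ #p.parts.toFinset * (z ^ p.parts.sup * w ^ p.parts.card) := by
  have hz : z ≠ 0 := left_ne_zero_of_mul_eq_one hzw
  rw [← (equivSigma n).symm.sum_comp, Fintype.sum_sigma]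
  refine sum_congr rfl fun p _ => ?_
  have hrank (s : {s : Finset ℕ // s ∈ p.parts.toFinset.powerset}) :
      z ^ ((equivSigma n).symm ⟨p, s⟩).rank = z ^ p.parts.sup * w ^ p.parts.card := by
    change z ^ ((p.parts.sup : ℤ) - p.parts.card) = _
    rw [zpow_sub₀ hz, zpow_natCast, zpow_natCast, eq_inv_of_mul_eq_one_right hzw, inv_pow,
      div_eq_mul_inv]
  simp only [hrank, sum_const, card_univ, Fintype.card_coe, card_powerset, nsmul_eq_mul,
    Nat.cast_pow, Nat.cast_ofNat]

theorem sum_zpow_rank_eq_sum_nbar {F : Type*} [Field F] {z : F} {c : ℕ} (hc : c ≠ 0)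
    (hz : z ^ c = 1) (n : ℕ) :
    ∑ P : Overpartition n, z ^ P.rank = ∑ a ∈ range c, nbar a c n * z ^ a := by
  have hmaps : ∀ P ∈ (univ : Finset (Overpartition n)), (P.rank % c).toNat ∈ range c :=
    fun P _ => mem_range.2 (by have := P.rank.emod_lt_of_pos (b := c) (by lia); lia)
  have hmod {P : Overpartition n} {a : ℕ} (ha : a < c) :
      (P.rank % c).toNat = a ↔ P.rank ≡ a [ZMOD c] := by
    have hnonneg := P.rank.emod_nonneg (b := c) (by lia)
    rw [Int.ModEq, Int.emod_eq_of_lt (by lia) (Int.ofNat_lt.2 ha)]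
    lia
  rw [← sum_fiberwise_of_maps_to hmaps]
  refine sum_congr rfl fun a ha => ?_
  have hpow : ∀ P ∈ ({P | (P.rank % c).toNat = a} : Finset (Overpartition n)),
      z ^ P.rank = z ^ a := fun P hP => by
    obtain ⟨k, hk⟩ := ((hmod (mem_range.1 ha)).1 (mem_filter.1 hP).2).symm.dvd
    rw [sub_eq_iff_eq_add.1 hk, zpow_add₀ (by rintro rfl; simp [hc] at hz), zpow_mul,
      zpow_natCast, hz, one_zpow, one_mul, zpow_natCast]
  rw [sum_congr rfl hpow, sum_const, nsmul_eq_mul, nbar, Nat.card_eq_fintype_card,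
    Fintype.card_subtype]
  congr 3
  ext P
  simp only [mem_filter, mem_univ, true_and, hmod (mem_range.1 ha)]

end Overpartition

theorem nbar_sub_add_nbar_sub_mul_I {n : ℕ} (hn : n ≠ 0) :
    (nbar 0 4 n - nbar 2 4 n : ℂ) + (nbar 1 4 n - nbar 3 4 n) * Complex.I =
      if IsSquare n then 2 else 0 := by
  have hI : Complex.I * -Complex.I = 1 := by simp
  rw [← QSeries.sum_partition_eq_ite_isSquare hI (add_neg_cancel _) hn,
    ← Overpartition.sum_zpow_rank hI,
    Overpartition.sum_zpow_rank_eq_sum_nbar four_ne_zero Complex.I_pow_four]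
  simp only [sum_range_succ, sum_range_zero, Nat.cast_zero, Nat.cast_one, Nat.cast_ofNat,
    Complex.I_sq, Complex.I_pow_three]
  ring

theorem nbar_zero_eq_nbar_two_add {n : ℕ} (hn : n ≠ 0) :
    nbar 0 4 n = nbar 2 4 n + if IsSquare n then 2 else 0 := by
  have hre := congrArg Complex.re (nbar_sub_add_nbar_sub_mul_I hn)
  have hsub : (nbar 0 4 n - nbar 2 4 n : ℝ) = if IsSquare n then 2 else 0 := by
    split_ifs at hre ⊢ <;> simpa using hre
  rw [sub_eq_iff_eq_add'] at hsub
  exact_mod_cast hsub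

theorem nbar_one_eq_nbar_three {n : ℕ} (hn : n ≠ 0) : nbar 1 4 n = nbar 3 4 n := by
  have him := congrArg Complex.im (nbar_sub_add_nbar_sub_mul_I hn)
  split_ifs at him <;> simpa [sub_eq_zero] using him

theorem exists_nbar_alternating_sum_eq {n : ℕ} (hn : 2 ≤ n) :
    ∃ e : ℕ, 2 ≤ e ∧
      (nbar 0 4 n - nbar 1 4 n + nbar 2 4 n - nbar 3 4 n : ℤ) = -2 * (-1) ^ n * e := by
  obtain ⟨e, he, hsum⟩ := QSeries.exists_sum_partition_neg_one_eq (F := ℚ) hn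
  rw [← Overpartition.sum_zpow_rank (by norm_num),
    Overpartition.sum_zpow_rank_eq_sum_nbar four_ne_zero (by norm_num)] at hsum
  refine ⟨e, he, Int.cast_injective (α := ℚ) ?_⟩
  push_cast
  rw [← hsum]
  simp only [sum_range_succ, sum_range_zero, Nat.cast_zero, Nat.cast_one, Nat.cast_ofNat]
  ring

theorem stmt11 :
    (∀ n : ℕ, 3 ≤ n → Odd n → nbar 1 4 n < nbar 2 4 n) ∧
    (∀ n : ℕ, 2 ≤ n → Even n → nbar 2 4 n < nbar 1 4 n) := by
  have hdiff {n : ℕ} (hn : 2 ≤ n) : ∃ e : ℕ, 2 ≤ e ∧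
      2 * (nbar 1 4 n - nbar 2 4 n : ℤ) = 2 * (-1) ^ n * e + if IsSquare n then 2 else 0 := by
    obtain ⟨e, he, halt⟩ := exists_nbar_alternating_sum_eq hn
    have hn₀ : n ≠ 0 := by lia
    rw [nbar_zero_eq_nbar_two_add hn₀, ← nbar_one_eq_nbar_three hn₀] at halt
    push_cast at halt
    exact ⟨e, he, by linear_combination -halt⟩
  refine ⟨fun n hn hodd => ?_, fun n hn heven => ?_⟩
  · obtain ⟨e, he, heq⟩ := hdiff (n := n) (by lia)
    rw [hodd.neg_one_pow] at heq
    split_ifs at heq <;> lia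
  · obtain ⟨e, he, heq⟩ := hdiff hn
    rw [heven.neg_one_pow] at heq
    split_ifs at heq <;> lia
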